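/- Assume hypothesis (H). Then there exist constants κ₁ > 0, κ₂ > 0 and h₀ > 0, depending only on N, a, b, c and u_b, with the following property. For every straight mesh on [a,c] and inverse mesh on [0,u_b] whose maximal step size h satisfies h ≤ h₀, and for every scheme pair (ũ, x̃) additionally satisfying the inequalities 0 < ũ(x) < u_b, ũ'(x) > 0, ũ''(x) ≥ 0 on (a,c] and c < x̃(v), x̃'(v) > 0, x̃''(v) ≤ 0 on (ũ(c), u_b] (second derivatives taken on mesh subintervals), there exists x̂ ∈ C²([0,u_b]) with x̂''(v) = −𝒩(v, x̂(v))·(x̂'(v))³ on [0,u_b], x̂(0) = a and x̂'(0) = 1/ũ'(a), such that x̂ is strictly increasing, its image contains [a,c], and, writing û = x̂⁻¹ for the inverse function of x̂, one has max_{x ∈ [a,c]} max(|ũ(x) − û(x)|, |ũ'(x) − û'(x)|) ≤ κ₁·h² and max_{v ∈ [ũ(c), u_b]} max(|x̃(v) − x̂(v)|, |x̃'(v) − x̂'(v)|) ≤ κ₂·h². -/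

import Mathlib

open Set Filter

noncomputable section

/-- Partial derivative of a two-argument function with respect to its first argument. -/
def pd1 (f : ℝ → ℝ → ℝ) (u x : ℝ) : ℝ := deriv (fun t => f t x) u

/-- Partial derivative of a two-argument function with respect to its second argument. -/
def pd2 (f : ℝ → ℝ → ℝ) (u x : ℝ) : ℝ := deriv (fun s => f u s) x

/-- The nonlinearity `𝒩(u,x) = N(u,x)·u`. -/
def Ncal (N : ℝ → ℝ → ℝ) (u x : ℝ) : ℝ := N u x * u

/-- `u` is twice continuously differentiable on `s`, with first derivative `u'`
and second derivative `u''` (derivatives within `s`). -/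
def IsC2On (u u' u'' : ℝ → ℝ) (s : Set ℝ) : Prop :=
  (∀ x ∈ s, HasDerivWithinAt u (u' x) s x) ∧
  (∀ x ∈ s, HasDerivWithinAt u' (u'' x) s x) ∧
  ContinuousOn u'' s

/-- The straight boundary value problem: `u ∈ C²([a,b])`, `u'' = 𝒩(u(x),x)` on `[a,b]`,
`u(a) = 0`, `u(b) = ub`. -/
def IsStraightBVP (N : ℝ → ℝ → ℝ) (a b ub : ℝ) (u u' u'' : ℝ → ℝ) : Prop :=
  IsC2On u u' u'' (Icc a b) ∧
  (∀ x ∈ Icc a b, u'' x = Ncal N (u x) x) ∧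
  u a = 0 ∧ u b = ub

/-- Hypothesis (H): `N`, `∂N/∂x`, `∂N/∂u`, `∂²N/∂x∂u`, `∂²N/∂u²` are all
nonnegative for `u ≥ 0` and `x ∈ [a,b]`. -/
def HypH (N : ℝ → ℝ → ℝ) (a b : ℝ) : Prop :=
  ∀ u : ℝ, 0 ≤ u → ∀ x ∈ Icc a b,
    0 ≤ N u x ∧ 0 ≤ pd2 N u x ∧ 0 ≤ pd1 N u x ∧
    0 ≤ pd2 (pd1 N) u x ∧ 0 ≤ pd1 (pd1 N) u x

/-- A mesh: finitely many strictly increasing points `pt 0 < pt 1 < ⋯ < pt n`. -/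
structure Mesh where
  n : ℕ
  pt : ℕ → ℝ
  npos : 0 < n
  mono : ∀ i < n, pt i < pt (i + 1)

/-- The coefficient `α_i(p,q,x)` of the straight discretized equation,
where `xi` is the mesh point `x_i`. -/
def alphaC (N : ℝ → ℝ → ℝ) (xi p q x : ℝ) : ℝ :=
  (pd1 N q xi * p + pd2 N q xi) * (x - xi) + N q xi

/-- The coefficient `β_i(p,q,v)` of the inverse discretized equation,
where `ui` is the (shifted) mesh point `ū_i`. -/
def betaC (N : ℝ → ℝ → ℝ) (ui p q v : ℝ) : ℝ :=
  -(pd1 (Ncal N) ui q + pd2 (Ncal N) ui q * p) * (v - ui) - Ncal N ui q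

/-- Shifted mesh knots `ū_i = max(u_i, s)`. -/
def ubar (m : Mesh) (s : ℝ) (i : ℕ) : ℝ := max (m.pt i) s

/-- A straight scheme solution on `[a,c]` with respect to the mesh `m`:
`ũ ∈ C¹([a,c])` and on each mesh subinterval `[x_i, x_{i+1}]` the second
derivative of `ũ` equals `α_i(ũ'(x_i), ũ(x_i), x)·ũ(x)`. -/
def IsStraightSol (N : ℝ → ℝ → ℝ) (a c : ℝ) (m : Mesh) (u u' : ℝ → ℝ) : Prop :=
  (∀ x ∈ Icc a c, HasDerivWithinAt u (u' x) (Icc a c) x) ∧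
  ContinuousOn u' (Icc a c) ∧
  ∀ i < m.n, ∀ x ∈ Icc (m.pt i) (m.pt (i + 1)),
    HasDerivWithinAt u'
      (alphaC N (m.pt i) (u' (m.pt i)) (u (m.pt i)) x * u x)
      (Icc (m.pt i) (m.pt (i + 1))) x

/-- An inverse scheme solution on `[s, ub]` with respect to the mesh `m` (shifted by `s`):
`x̃ ∈ C¹([s,ub])` and on each subinterval `[ū_i, ū_{i+1}]` the second derivative of `x̃`
equals `β_i(x̃'(ū_i), x̃(ū_i), v)·(x̃'(v))³`. -/
def IsInvSol (N : ℝ → ℝ → ℝ) (ub : ℝ) (m : Mesh) (s : ℝ) (X X' : ℝ → ℝ) : Prop :=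
  (∀ v ∈ Icc s ub, HasDerivWithinAt X (X' v) (Icc s ub) v) ∧
  ContinuousOn X' (Icc s ub) ∧
  ∀ i < m.n, ∀ v ∈ Icc (ubar m s i) (ubar m s (i + 1)),
    HasDerivWithinAt X'
      (betaC N (ubar m s i) (X' (ubar m s i)) (X (ubar m s i)) v * (X' v) ^ 3)
      (Icc (ubar m s i) (ubar m s (i + 1))) v

/-- A scheme pair `(ũ, x̃)`. -/
def IsSchemePair (N : ℝ → ℝ → ℝ) (a b c ub : ℝ) (ms mi : Mesh)
    (u u' X X' : ℝ → ℝ) : Prop :=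
  IsStraightSol N a c ms u u' ∧ u a = 0 ∧ 0 < u c ∧ u c < ub ∧ u' c ≠ 0 ∧
  IsInvSol N ub mi (u c) X X' ∧ X ub = b ∧ X (u c) = c ∧ X' (u c) = 1 / u' c

/-- A scheme pair additionally satisfying the sign inequalities
`0 < ũ < u_b`, `ũ' > 0`, `ũ'' ≥ 0` on `(a,c]`, and `c < x̃`, `x̃' > 0`, `x̃'' ≤ 0`
on `(ũ(c), u_b]` (second derivatives taken on the mesh subintervals). -/
def GoodPair (N : ℝ → ℝ → ℝ) (a b c ub : ℝ) (ms mi : Mesh)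
    (u u' X X' : ℝ → ℝ) : Prop :=
  IsSchemePair N a b c ub ms mi u u' X X' ∧
  (∀ x ∈ Ioc a c, 0 < u x ∧ u x < ub ∧ 0 < u' x) ∧
  (∀ i < ms.n, ∀ x ∈ Icc (ms.pt i) (ms.pt (i + 1)), x ∈ Ioc a c →
    0 ≤ alphaC N (ms.pt i) (u' (ms.pt i)) (u (ms.pt i)) x * u x) ∧
  (∀ v ∈ Ioc (u c) ub, c < X v ∧ 0 < X' v) ∧
  (∀ i < mi.n, ∀ v ∈ Icc (ubar mi (u c) i) (ubar mi (u c) (i + 1)), v ∈ Ioc (u c) ub →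
    betaC N (ubar mi (u c) i) (X' (ubar mi (u c) i)) (X (ubar mi (u c) i)) v * (X' v) ^ 3 ≤ 0)

/-- All steps of the straight mesh `ms` and of the (shifted) inverse mesh `mi`
are of size at most `h`. -/
def StepLe (ms mi : Mesh) (s h : ℝ) : Prop :=
  (∀ i < ms.n, ms.pt (i + 1) - ms.pt i ≤ h) ∧
  (∀ i < mi.n, ubar mi s (i + 1) - ubar mi s i ≤ h)

/-!
Invert `ũ` on `[0, ũ(c)]` and continue the inverse by `x̃`: the junction conditions make the
result one `C¹` function, and since the schemes linearize the coefficients at the mesh points it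
satisfies `x'' = -𝒩(v, x) x'³` up to a defect of order `h²`. The constant is uniform because the
slopes are: along the trajectory, the sum of the height `v` and of the slope `1 / x'` grows at
most exponentially in `x`, it is at least `u_b` at the end `x = b` and equals `ũ'(a)` at the
start `x = a`, while concavity of `x̃` bounds `ũ'(c)` from above. By Gronwall's inequality an
exact solution with the same initial data stays within `O(h²)` of the approximate one in `C¹`;
it is therefore increasing, and inverting it back gives the comparison with `ũ`.
-/

/-! ### Functions with one-sided derivatives -/

theorem hasDerivWithinAt_Ici_of_Icc {E : Type*} [NormedAddCommGroup E] [NormedSpace ℝ E]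
    {f : ℝ → E} {f' : E} {a b x : ℝ} (hf : HasDerivWithinAt f f' (Icc a b) x)
    (hx : x ∈ Ico a b) : HasDerivWithinAt f f' (Ici x) x :=
  (hf.mono (Icc_subset_Icc_left hx.1)).mono_of_mem_nhdsWithin (Icc_mem_nhdsGE hx.2)

theorem monotoneOn_of_rightDeriv_nonneg {f f' : ℝ → ℝ} {a b : ℝ}
    (hf : ContinuousOn f (Icc a b)) (hf' : ∀ x ∈ Ico a b, HasDerivWithinAt f (f' x) (Ici x) x)
    (h0 : ∀ x ∈ Ico a b, 0 ≤ f' x) : MonotoneOn f (Icc a b) := by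
  intro x hx y hy hxy
  have hsub : Ico x y ⊆ Ico a b := Ico_subset_Ico hx.1 hy.2
  exact image_le_of_deriv_right_le_deriv_boundary (f := fun _ => f x) (f' := fun _ => 0)
    continuousOn_const (fun _ _ => hasDerivWithinAt_const _ _ _) le_rfl
    (hf.mono (Icc_subset_Icc hx.1 hy.2)) (fun t ht => hf' t (hsub ht))
    (fun t ht => h0 t (hsub ht)) ⟨hxy, le_rfl⟩

theorem mul_sub_le_sub_of_le_rightDeriv {f f' : ℝ → ℝ} {a b k : ℝ} (hab : a ≤ b)
    (hf : ContinuousOn f (Icc a b)) (hf' : ∀ x ∈ Ico a b, HasDerivWithinAt f (f' x) (Ici x) x)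
    (hk : ∀ x ∈ Ico a b, k ≤ f' x) : k * (b - a) ≤ f b - f a := by
  have hmono := monotoneOn_of_rightDeriv_nonneg (f := fun x => f x - k * x)
    (f' := fun x => f' x - k) (hf.sub (by fun_prop))
    (fun x hx => by simpa using (hf' x hx).fun_sub ((hasDerivWithinAt_id x _).const_mul k))
    (fun x hx => sub_nonneg.2 (hk x hx))
  linarith [hmono ⟨le_rfl, hab⟩ ⟨hab, le_rfl⟩ hab]

theorem le_mul_exp_of_rightDeriv_le {f f' g g' : ℝ → ℝ} {a b : ℝ} (hab : a ≤ b)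
    (hf : ContinuousOn f (Icc a b)) (hf' : ∀ x ∈ Ico a b, HasDerivWithinAt f (f' x) (Ici x) x)
    (hg : ContinuousOn g (Icc a b)) (hg' : ∀ x ∈ Ico a b, HasDerivWithinAt g (g' x) (Ici x) x)
    (hle : ∀ x ∈ Ico a b, f' x ≤ g' x * f x) : f b ≤ f a * Real.exp (g b - g a) := by
  have hmono := monotoneOn_of_rightDeriv_nonneg (f := fun x => -(f x * Real.exp (-g x)))
    (f' := fun x => -(f' x * Real.exp (-g x) + f x * (Real.exp (-g x) * -g' x)))
    (hf.mul (Real.continuous_exp.comp_continuousOn hg.neg)).neg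
    (fun x hx => ((hf' x hx).mul (hg' x hx).neg.exp).neg)
    (fun x hx => by nlinarith [hle x hx, Real.exp_pos (-g x)])
  have hweighted : f b * Real.exp (-g b) ≤ f a * Real.exp (-g a) :=
    neg_le_neg_iff.1 (hmono ⟨le_rfl, hab⟩ ⟨hab, le_rfl⟩ hab)
  calc f b = f b * Real.exp (-g b) * Real.exp (g b) := by
        rw [mul_assoc, ← Real.exp_add, neg_add_cancel, Real.exp_zero, mul_one]
    _ ≤ f a * Real.exp (-g a) * Real.exp (g b) := by gcongr
    _ = f a * Real.exp (g b - g a) := by rw [mul_assoc, ← Real.exp_add]; congr 2; ring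

/-- `f` is continuously differentiable on `[a, b]` with derivative `f'`, and `f'` has right
derivative `f''` on `[a, b)`. This is the regularity of a scheme solution: using right derivatives
avoids treating the mesh points, where the second derivative may jump, separately. -/
structure HasRightSndDeriv (f f' f'' : ℝ → ℝ) (a b : ℝ) : Prop where
  hasDerivWithinAt : ∀ x ∈ Icc a b, HasDerivWithinAt f (f' x) (Icc a b) x
  continuousOn_deriv : ContinuousOn f' (Icc a b)
  hasRightDeriv_deriv : ∀ x ∈ Ico a b, HasDerivWithinAt f' (f'' x) (Ici x) x

namespace HasRightSndDeriv

variable {f f' f'' : ℝ → ℝ} {a b x y B : ℝ}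

theorem continuousOn (hf : HasRightSndDeriv f f' f'' a b) : ContinuousOn f (Icc a b) :=
  fun x hx => (hf.hasDerivWithinAt x hx).continuousWithinAt

theorem hasRightDeriv (hf : HasRightSndDeriv f f' f'' a b) (hx : x ∈ Ico a b) :
    HasDerivWithinAt f (f' x) (Ici x) x :=
  hasDerivWithinAt_Ici_of_Icc (hf.hasDerivWithinAt x (Ico_subset_Icc_self hx)) hx

theorem mono (hf : HasRightSndDeriv f f' f'' a b) (hx : a ≤ x) (hy : y ≤ b) :
    HasRightSndDeriv f f' f'' x y where
  hasDerivWithinAt t ht :=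
    (hf.hasDerivWithinAt t (Icc_subset_Icc hx hy ht)).mono (Icc_subset_Icc hx hy)
  continuousOn_deriv := hf.continuousOn_deriv.mono (Icc_subset_Icc hx hy)
  hasRightDeriv_deriv t ht := hf.hasRightDeriv_deriv t (Ico_subset_Ico hx hy ht)

theorem neg (hf : HasRightSndDeriv f f' f'' a b) :
    HasRightSndDeriv (fun x => -f x) (fun x => -f' x) (fun x => -f'' x) a b where
  hasDerivWithinAt x hx := (hf.hasDerivWithinAt x hx).neg
  continuousOn_deriv := hf.continuousOn_deriv.neg
  hasRightDeriv_deriv x hx := (hf.hasRightDeriv_deriv x hx).neg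

theorem mul_sub_le_sub (hf : HasRightSndDeriv f f' f'' a b) {k : ℝ}
    (hk : ∀ t ∈ Icc a b, k ≤ f' t) (hx : x ∈ Icc a b) (hy : y ∈ Icc a b) (hxy : x ≤ y) :
    k * (y - x) ≤ f y - f x :=
  mul_sub_le_sub_of_le_rightDeriv hxy (hf.mono hx.1 hy.2).continuousOn
    (fun _ ht => (hf.mono hx.1 hy.2).hasRightDeriv ht)
    (fun _ ht => hk _ ⟨hx.1.trans ht.1, ht.2.le.trans hy.2⟩)

theorem monotoneOn (hf : HasRightSndDeriv f f' f'' a b) (h0 : ∀ t ∈ Icc a b, 0 ≤ f' t) :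
    MonotoneOn f (Icc a b) := fun x hx y hy hxy => by
  simpa using hf.mul_sub_le_sub h0 hx hy hxy

theorem monotoneOn_deriv (hf : HasRightSndDeriv f f' f'' a b)
    (h0 : ∀ t ∈ Ico a b, 0 ≤ f'' t) : MonotoneOn f' (Icc a b) :=
  monotoneOn_of_rightDeriv_nonneg hf.continuousOn_deriv hf.hasRightDeriv_deriv h0

theorem antitoneOn_deriv (hf : HasRightSndDeriv f f' f'' a b)
    (h0 : ∀ t ∈ Ico a b, f'' t ≤ 0) : AntitoneOn f' (Icc a b) := fun x hx y hy hxy => by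
  simpa using hf.neg.monotoneOn_deriv (fun t ht => neg_nonneg.2 (h0 t ht)) hx hy hxy

theorem deriv_mul_sub_le_of_convex (hf : HasRightSndDeriv f f' f'' a b)
    (h0 : ∀ t ∈ Ico a b, 0 ≤ f'' t) (hx : x ∈ Icc a b) (hy : y ∈ Icc a b) (hxy : x ≤ y) :
    f' x * (y - x) ≤ f y - f x :=
  (hf.mono hx.1 hy.2).mul_sub_le_sub
    (fun _ ht => hf.monotoneOn_deriv h0 hx ⟨hx.1.trans ht.1, ht.2.trans hy.2⟩ ht.1)
    ⟨le_rfl, hxy⟩ ⟨hxy, le_rfl⟩ hxy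

theorem sub_le_deriv_mul_sub_of_convex (hf : HasRightSndDeriv f f' f'' a b)
    (h0 : ∀ t ∈ Ico a b, 0 ≤ f'' t) (hx : x ∈ Icc a b) (hy : y ∈ Icc a b) (hxy : x ≤ y) :
    f y - f x ≤ f' y * (y - x) := by
  have := (hf.mono hx.1 hy.2).neg.mul_sub_le_sub (k := -f' y)
    (fun t ht => neg_le_neg
      (hf.monotoneOn_deriv h0 ⟨hx.1.trans ht.1, ht.2.trans hy.2⟩ hy ht.2))
    ⟨le_rfl, hxy⟩ ⟨hxy, le_rfl⟩ hxy
  linarith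

theorem deriv_mul_sub_le_of_concave (hf : HasRightSndDeriv f f' f'' a b)
    (h0 : ∀ t ∈ Ico a b, f'' t ≤ 0) (hx : x ∈ Icc a b) (hy : y ∈ Icc a b) (hxy : x ≤ y) :
    f' y * (y - x) ≤ f y - f x := by
  linarith [hf.neg.sub_le_deriv_mul_sub_of_convex (fun t ht => neg_nonneg.2 (h0 t ht)) hx hy hxy]

theorem sub_le_deriv_mul_sub_of_concave (hf : HasRightSndDeriv f f' f'' a b)
    (h0 : ∀ t ∈ Ico a b, f'' t ≤ 0) (hx : x ∈ Icc a b) (hy : y ∈ Icc a b) (hxy : x ≤ y) :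
    f y - f x ≤ f' x * (y - x) := by
  linarith [hf.neg.deriv_mul_sub_le_of_convex (fun t ht => neg_nonneg.2 (h0 t ht)) hx hy hxy]

theorem abs_sub_le (hf : HasRightSndDeriv f f' f'' a b) (hB : ∀ t ∈ Icc a b, |f' t| ≤ B)
    (hx : x ∈ Icc a b) (hy : y ∈ Icc a b) : |f y - f x| ≤ B * |y - x| :=
  (convex_Icc a b).norm_image_sub_le_of_norm_hasDerivWithin_le hf.hasDerivWithinAt hB hx hy

theorem abs_taylor_le (hf : HasRightSndDeriv f f' f'' a b) (hB : ∀ t ∈ Ico a b, |f'' t| ≤ B)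
    (hx : x ∈ Icc a b) (hy : y ∈ Icc a b) (hxy : x ≤ y) :
    |f y - f x - (y - x) * f' x| ≤ B * (y - x) ^ 2 := by
  rcases hxy.eq_or_lt with rfl | hlt
  · simp
  have hsub : Ico x y ⊆ Ico a b := Ico_subset_Ico hx.1 hy.2
  have hB0 : 0 ≤ B := (abs_nonneg _).trans (hB x (hsub ⟨le_rfl, hlt⟩))
  have hderiv : ∀ t ∈ Icc x y, |f' t - f' x| ≤ B * (t - x) :=
    norm_image_sub_le_of_norm_deriv_right_le_segment (hf.mono hx.1 hy.2).continuousOn_deriv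
      (fun t ht => hf.hasRightDeriv_deriv t (hsub ht)) (fun t ht => hB t (hsub ht))
  have hdiff := norm_image_sub_le_of_norm_deriv_right_le_segment
    (f := fun t => f t - t * f' x) (f' := fun t => f' t - f' x) (C := B * (y - x))
    ((hf.mono hx.1 hy.2).continuousOn.sub (by fun_prop))
    (fun t ht => by
      simpa using (hf.hasRightDeriv (hsub ht)).fun_sub
        ((hasDerivWithinAt_id t (Ici t)).mul_const (f' x)))
    (fun t ht => (hderiv t (Ico_subset_Icc_self ht)).trans (by gcongr; exact ht.2.le))
    y ⟨hxy, le_rfl⟩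
  calc |f y - f x - (y - x) * f' x| = |f y - y * f' x - (f x - x * f' x)| := by congr 1; ring
    _ ≤ B * (y - x) * (y - x) := hdiff
    _ = B * (y - x) ^ 2 := by ring

end HasRightSndDeriv

/-! ### Inverse functions -/

theorem hasDerivWithinAt_of_leftInverse {f g : ℝ → ℝ} {f' y : ℝ} {s t : Set ℝ}
    (hg : ContinuousWithinAt g s y) (hst : MapsTo g s t) (hf : HasDerivWithinAt f f' t (g y))
    (hf' : f' ≠ 0) (hy : y ∈ s) (hfg : ∀ z ∈ s, f (g z) = z) : HasDerivWithinAt g f'⁻¹ s y := by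
  have hequiv : HasFDerivWithinAt f
      (ContinuousLinearEquiv.unitsEquivAut ℝ (Units.mk0 f' hf') : ℝ →L[ℝ] ℝ) t (g y) := hf
  exact hequiv.of_local_left_inverse (hg.tendsto_nhdsWithin hst) hy
    (eventually_nhdsWithin_of_forall hfg)

/-- `g` inverts `f`, an increasing bijection from `[a, b]` to `[f a, f b]` with derivative `f'`. -/
structure IsIncreasingInverse (f f' g : ℝ → ℝ) (a b : ℝ) : Prop where
  strictMonoOn : StrictMonoOn f (Icc a b)
  left_inv : ∀ x ∈ Icc a b, g (f x) = x
  mem : ∀ y ∈ Icc (f a) (f b), g y ∈ Icc a b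
  right_inv : ∀ y ∈ Icc (f a) (f b), f (g y) = y
  hasDerivWithinAt : ∀ y ∈ Icc (f a) (f b),
    HasDerivWithinAt g (f' (g y))⁻¹ (Icc (f a) (f b)) y

theorem mul_abs_sub_le_abs_sub {f f' : ℝ → ℝ} {a b k x y : ℝ}
    (hf : ∀ x ∈ Icc a b, HasDerivWithinAt f (f' x) (Icc a b) x) (hk : ∀ x ∈ Icc a b, k ≤ f' x)
    (hx : x ∈ Icc a b) (hy : y ∈ Icc a b) : k * |x - y| ≤ |f x - f y| := by
  wlog hyx : y ≤ x generalizing x y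
  · rw [abs_sub_comm x, abs_sub_comm (f x)]
    exact this hy hx (le_of_not_ge hyx)
  have hsub : Icc y x ⊆ Icc a b := Icc_subset_Icc hy.1 hx.2
  rw [abs_of_nonneg (sub_nonneg.2 hyx)]
  exact (mul_sub_le_sub_of_le_rightDeriv hyx
    (fun t ht => ((hf t (hsub ht)).mono hsub).continuousWithinAt)
    (fun t ht => hasDerivWithinAt_Ici_of_Icc
      ((hf t (hsub (Ico_subset_Icc_self ht))).mono hsub) ht)
    (fun t ht => hk t (hsub (Ico_subset_Icc_self ht)))).trans (le_abs_self _)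

theorem exists_isIncreasingInverse {f f' : ℝ → ℝ} {a b k : ℝ} (hab : a ≤ b) (hk : 0 < k)
    (hf : ∀ x ∈ Icc a b, HasDerivWithinAt f (f' x) (Icc a b) x)
    (hf' : ∀ x ∈ Icc a b, k ≤ f' x) : ∃ g, IsIncreasingInverse f f' g a b := by
  have hcont : ContinuousOn f (Icc a b) := fun x hx => (hf x hx).continuousWithinAt
  have hmono : StrictMonoOn f (Icc a b) := by
    refine strictMonoOn_of_deriv_pos (convex_Icc a b) hcont fun x hx => ?_
    rw [interior_Icc] at hx
    rw [((hf x (Ioo_subset_Icc_self hx)).hasDerivAt (Icc_mem_nhds hx.1 hx.2)).deriv]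
    exact hk.trans_le (hf' x (Ioo_subset_Icc_self hx))
  have hsurj : SurjOn f (Icc a b) (Icc (f a) (f b)) := intermediate_value_Icc hab hcont
  set g := Function.invFunOn f (Icc a b)
  have hmem : MapsTo g (Icc (f a) (f b)) (Icc a b) := hsurj.mapsTo_invFunOn
  have hright : ∀ y ∈ Icc (f a) (f b), f (g y) = y := hsurj.rightInvOn_invFunOn
  have hgcont : ContinuousOn g (Icc (f a) (f b)) := by
    refine (LipschitzOnWith.of_dist_le_mul (K := ⟨k⁻¹, by positivity⟩)
      fun x hx y hy => ?_).continuousOn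
    have h := mul_abs_sub_le_abs_sub hf hf' (hmem hx) (hmem hy)
    rwa [hright x hx, hright y hy, ← le_inv_mul_iff₀ hk] at h
  exact ⟨g, hmono, hmono.injOn.leftInvOn_invFunOn, hmem, hright, fun y hy =>
    hasDerivWithinAt_of_leftInverse (hgcont y hy) hmem (hf _ (hmem hy))
      (hk.trans_le (hf' _ (hmem hy))).ne' hy hright⟩

theorem HasRightSndDeriv.inverse {f f' f'' g : ℝ → ℝ} {a b : ℝ}
    (hf : HasRightSndDeriv f f' f'' a b) (hg : IsIncreasingInverse f f' g a b)
    (hpos : ∀ x ∈ Icc a b, 0 < f' x) :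
    HasRightSndDeriv g (fun y => (f' (g y))⁻¹) (fun y => -(f'' (g y) / f' (g y) ^ 3))
      (f a) (f b) where
  hasDerivWithinAt := hg.hasDerivWithinAt
  continuousOn_deriv := (hf.continuousOn_deriv.comp
    (fun y hy => (hg.hasDerivWithinAt y hy).continuousWithinAt) hg.mem).inv₀
      fun y hy => (hpos _ (hg.mem y hy)).ne'
  hasRightDeriv_deriv y hy := by
    have hy' : y ∈ Icc (f a) (f b) := Ico_subset_Icc_self hy
    have hlt : g y < b := by
      have hb : b ∈ Icc a b := ⟨(hg.mem y hy').1.trans (hg.mem y hy').2, le_rfl⟩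
      rw [← hg.strictMonoOn.lt_iff_lt (hg.mem y hy') hb, hg.right_inv y hy']
      exact hy.2
    have hmono : MapsTo g (Icc y (f b)) (Ici (g y)) := fun z hz => by
      have hz' : z ∈ Icc (f a) (f b) := ⟨hy.1.trans hz.1, hz.2⟩
      rw [mem_Ici, ← hg.strictMonoOn.le_iff_le (hg.mem y hy') (hg.mem z hz'), hg.right_inv y hy',
        hg.right_inv z hz']
      exact hz.1
    have hcomp := ((hf.hasRightDeriv_deriv (g y) ⟨(hg.mem y hy').1, hlt⟩).comp y
      ((hg.hasDerivWithinAt y hy').mono (Icc_subset_Icc_left hy.1)) hmono).inv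
        (hpos _ (hg.mem y hy')).ne'
    have := hpos _ (hg.mem y hy')
    exact (hasDerivWithinAt_Ici_of_Icc hcomp ⟨le_rfl, hy.2⟩).congr_deriv
      (by simp only [Function.comp_apply]; field_simp)

theorem abs_inv_sub_inv_le {p q k : ℝ} (hk : 0 < k) (hp : k ≤ p) (hq : k ≤ q) :
    |p⁻¹ - q⁻¹| ≤ |p - q| / k ^ 2 := by
  have hp0 : 0 < p := hk.trans_le hp
  have hq0 : 0 < q := hk.trans_le hq
  have : p⁻¹ - q⁻¹ = (q - p) / (p * q) := by field_simp
  rw [this, abs_div, abs_sub_comm, abs_of_pos (mul_pos hp0 hq0), sq]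
  gcongr

/-! ### Shadowing of approximate trajectories -/

section Shadowing

variable {E : Type*} [NormedAddCommGroup E] [NormedSpace ℝ E]

/-- `z` solves `z' = F v z` on `[s, t]` up to a defect of norm at most `ε`, in the sense of right
derivatives. -/
structure IsApproxSolution (F : ℝ → E → E) (ε : ℝ) (z : ℝ → E) (s t : ℝ) : Prop where
  continuousOn : ContinuousOn z (Icc s t)
  exists_rightDeriv : ∀ v ∈ Ico s t, ∃ z', HasDerivWithinAt z z' (Ici v) v ∧ ‖z' - F v (z v)‖ ≤ ε

theorem IsApproxSolution.congr {F : ℝ → E → E} {ε s t : ℝ} {z w : ℝ → E}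
    (hz : IsApproxSolution F ε z s t) (hzw : EqOn w z (Icc s t)) : IsApproxSolution F ε w s t where
  continuousOn := hz.continuousOn.congr hzw
  exists_rightDeriv v hv := by
    obtain ⟨z', hz', hle⟩ := hz.exists_rightDeriv v hv
    have hnear : w =ᶠ[nhdsWithin v (Ici v)] z := by
      filter_upwards [Icc_mem_nhdsGE hv.2] with r hr using hzw ⟨hv.1.trans hr.1, hr.2⟩
    have hv' := hzw (Ico_subset_Icc_self hv)
    exact ⟨z', hz'.congr_of_eventuallyEq hnear hv', by rwa [hv']⟩

theorem IsApproxSolution.union {F : ℝ → E → E} {ε r s t : ℝ} {z : ℝ → E} (hrs : r ≤ s)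
    (hst : s ≤ t) (hleft : IsApproxSolution F ε z r s) (hright : IsApproxSolution F ε z s t) :
    IsApproxSolution F ε z r t where
  continuousOn := by
    rw [← Icc_union_Icc_eq_Icc hrs hst]
    exact hleft.continuousOn.union_of_isClosed hright.continuousOn isClosed_Icc isClosed_Icc
  exists_rightDeriv v hv := by
    rcases lt_or_ge v s with h | h
    · exact hleft.exists_rightDeriv v ⟨hv.1, h⟩
    · exact hright.exists_rightDeriv v ⟨h, hv.2⟩

theorem exists_solution_of_lipschitzWith_of_bounded [CompleteSpace E] {F : ℝ → E → E} {s t B : ℝ}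
    {L : NNReal} (hst : s ≤ t) (hLip : ∀ v ∈ Icc s t, LipschitzWith L (F v))
    (hbd : ∀ v ∈ Icc s t, ∀ y, ‖F v y‖ ≤ B) (hcont : ∀ y, ContinuousOn (F · y) (Icc s t))
    (y₀ : E) :
    ∃ y : ℝ → E, y s = y₀ ∧ ∀ v ∈ Icc s t, HasDerivWithinAt y (F v (y v)) (Icc s t) v := by
  have hB : 0 ≤ B := (norm_nonneg _).trans (hbd s ⟨le_rfl, hst⟩ y₀)
  have hts : 0 ≤ t - s := sub_nonneg.2 hst
  have h : IsPicardLindelof F (tmin := s) (tmax := t) ⟨s, le_rfl, hst⟩ y₀ (B * (t - s)).toNNReal 0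
      B.toNNReal L :=
    { lipschitzOnWith := fun v hv => (hLip v hv).lipschitzOnWith
      continuousOn := fun y _ => hcont y
      norm_le := fun v hv y _ => by rw [Real.coe_toNNReal _ hB]; exact hbd v hv y
      mul_max_le := by
        rw [Real.coe_toNNReal _ hB, Real.coe_toNNReal _ (mul_nonneg hB hts)]
        simp [hts] }
  exact h.exists_eq_forall_mem_Icc_hasDerivWithinAt₀

theorem gronwallBound_zero_le {K ε x T : ℝ} (hK : 0 < K) (hε : 0 ≤ ε) (hxT : x ≤ T) :
    gronwallBound 0 K ε x ≤ Real.exp (K * T) / K * ε := by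
  simp only [gronwallBound_of_K_ne_0 hK.ne', zero_mul, zero_add]
  calc ε / K * (Real.exp (K * x) - 1) ≤ ε / K * Real.exp (K * T) := by
        gcongr
        exact (sub_le_self _ zero_le_one).trans (by gcongr)
    _ = Real.exp (K * T) / K * ε := by ring

-- Truncating the field by a retraction `ρ` onto `K` makes it bounded and globally Lipschitz; its
-- solution stays in `K`, where the truncation is not felt.
theorem exists_solution_near_of_isApproxSolution [CompleteSpace E] {F : ℝ → E → E}
    (hF : ContDiff ℝ 1 (Function.uncurry F)) {K : Set E} (hK : IsCompact K) {ρ : E → E}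
    (hρ : LipschitzWith 1 ρ) (hρK : ∀ y, ρ y ∈ K) (hρid : ∀ y ∈ K, ρ y = y) {s t : ℝ}
    (hst : s ≤ t) :
    ∃ κ > 0, ∀ (ε r : ℝ) (z : ℝ → E), 0 ≤ ε → κ * ε ≤ r → IsApproxSolution F ε z s t →
      (∀ v ∈ Icc s t, Metric.closedBall (z v) r ⊆ K) →
      ∃ y : ℝ → E, y s = z s ∧ ∀ v ∈ Icc s t,
        HasDerivWithinAt y (F v (y v)) (Icc s t) v ∧ ‖y v - z v‖ ≤ κ * ε := by
  have hcompact := (isCompact_Icc (a := s) (b := t)).prod hK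
  obtain ⟨L, hL⟩ := LocallyLipschitzOn.exists_lipschitzOnWith_of_compact hcompact
    (hF.locallyLipschitz.locallyLipschitzOn (s := Icc s t ×ˢ K))
  obtain ⟨B, hB⟩ := hcompact.exists_bound_of_continuousOn hF.continuous.continuousOn
  have hLip : ∀ v ∈ Icc s t, LipschitzWith (L + 1) fun y => F v (ρ y) := fun v hv =>
    LipschitzWith.of_dist_le_mul fun y z =>
      calc dist (F v (ρ y)) (F v (ρ z)) ≤ L * dist (v, ρ y) (v, ρ z) :=
            hL.dist_le_mul (v, ρ y) ⟨hv, hρK y⟩ (v, ρ z) ⟨hv, hρK z⟩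
        _ = L * dist (ρ y) (ρ z) := by rw [dist_prod_same_left]
        _ ≤ (L + 1) * dist y z := by
            gcongr
            exacts [le_add_of_nonneg_right zero_le_one, by simpa using hρ.dist_le_mul y z]
  refine ⟨Real.exp ((L + 1) * (t - s)) / (L + 1), by positivity, fun ε r z hε hr hz hball => ?_⟩
  obtain ⟨y, hys, hy⟩ := exists_solution_of_lipschitzWith_of_bounded hst hLip
    (fun v hv y => hB (v, ρ y) ⟨hv, hρK y⟩)
    (fun y => (hF.continuous.comp (by fun_prop : Continuous fun v => (v, ρ y))).continuousOn) (z s)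
  choose! z' hz' hzε using hz.exists_rightDeriv
  have hzK : ∀ v ∈ Icc s t, ρ (z v) = z v := fun v hv =>
    hρid _ (hball v hv (Metric.mem_closedBall_self (le_trans (by positivity) hr)))
  have hdist : ∀ v ∈ Icc s t, ‖y v - z v‖ ≤ Real.exp ((L + 1) * (t - s)) / (L + 1) * ε :=
    fun v hv => by
      have h := dist_le_of_approx_trajectories_ODE_of_mem (s := fun _ => univ) (εf := 0) (δ := 0)
        (fun t ht => (hLip t (Ico_subset_Icc_self ht)).lipschitzOnWith)
        (fun v hv => (hy v hv).continuousWithinAt)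
        (fun v hv => hasDerivWithinAt_Ici_of_Icc (hy v (Ico_subset_Icc_self hv)) hv)
        (fun _ _ => (dist_self _).le) (fun _ _ => mem_univ _) hz.continuousOn hz'
        (fun v hv => by
          rw [hzK v (Ico_subset_Icc_self hv), dist_eq_norm]; exact hzε v hv)
        (fun _ _ => mem_univ _) (dist_le_zero.2 hys) v hv
      rw [dist_eq_norm, zero_add] at h
      exact h.trans (gronwallBound_zero_le (by positivity) hε (by linarith [hv.2]))
  refine ⟨y, hys, fun v hv => ⟨?_, hdist v hv⟩⟩
  have hyK : ρ (y v) = y v := hρid _ (hball v hv (by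
    rw [Metric.mem_closedBall, dist_eq_norm]; exact (hdist v hv).trans hr))
  simpa only [hyK] using hy v hv

end Shadowing

/-! ### Linearization along a curve -/

theorem exists_norm_sub_sub_smul_fderiv_le {E F : Type*} [NormedAddCommGroup E] [NormedSpace ℝ E]
    [NormedAddCommGroup F] [NormedSpace ℝ F] {f : E → F} (hf : ContDiff ℝ 2 f) {s : Set E}
    (hs : IsCompact s) (hconv : Convex ℝ s) {M : ℝ} (hM : 0 ≤ M) :
    ∃ C, 0 ≤ C ∧ ∀ p ∈ s, ∀ q ∈ s, ∀ (w : E) (δ : ℝ), ‖q - p‖ ≤ M * |δ| →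
      ‖q - p - δ • w‖ ≤ M * δ ^ 2 → ‖f q - f p - δ • fderiv ℝ f p w‖ ≤ C * δ ^ 2 := by
  have hf' : ContDiff ℝ 1 (fderiv ℝ f) := hf.fderiv_right (by norm_num)
  obtain ⟨L, hL⟩ := LocallyLipschitzOn.exists_lipschitzOnWith_of_compact hs
    (hf'.locallyLipschitz.locallyLipschitzOn (s := s))
  obtain ⟨B, hB⟩ := hs.exists_bound_of_continuousOn hf'.continuous.continuousOn
  refine ⟨L * M ^ 2 + |B| * M, by positivity, fun p hp q hq w δ hqp hw => ?_⟩
  have htaylor : ‖f q - f p - fderiv ℝ f p (q - p)‖ ≤ L * ‖q - p‖ * ‖q - p‖ := by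
    have hseg := hconv.segment_subset hp hq
    refine (convex_segment p q).norm_image_sub_le_of_norm_fderiv_le'
      (fun z _ => hf.differentiable (by norm_num) z) (fun z hz => ?_)
      (left_mem_segment ℝ p q) (right_mem_segment ℝ p q)
    calc ‖fderiv ℝ f z - fderiv ℝ f p‖ ≤ L * ‖z - p‖ := by
          simpa only [dist_eq_norm] using hL.dist_le_mul z (hseg hz) p hp
      _ ≤ L * ‖q - p‖ := by gcongr; exact norm_sub_le_of_mem_segment hz
  have hdir : ‖fderiv ℝ f p (q - p - δ • w)‖ ≤ |B| * (M * δ ^ 2) :=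
    (fderiv ℝ f p).le_of_opNorm_le_of_le ((hB p hp).trans (le_abs_self B)) hw
  calc ‖f q - f p - δ • fderiv ℝ f p w‖
      = ‖(f q - f p - fderiv ℝ f p (q - p)) + fderiv ℝ f p (q - p - δ • w)‖ := by
        simp only [map_sub, map_smul]; congr 1; abel
    _ ≤ L * ‖q - p‖ * ‖q - p‖ + |B| * (M * δ ^ 2) := norm_add_le_of_le htaylor hdir
    _ ≤ L * (M * |δ|) * (M * |δ|) + |B| * (M * δ ^ 2) := by gcongr
    _ = (L * M ^ 2 + |B| * M) * δ ^ 2 := by rw [← sq_abs δ]; ring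

theorem fderiv_uncurry_apply {F : ℝ → ℝ → ℝ} {u x : ℝ}
    (hF : DifferentiableAt ℝ (Function.uncurry F) (u, x)) (p q : ℝ) :
    fderiv ℝ (Function.uncurry F) (u, x) (p, q) = pd1 F u x * p + pd2 F u x * q := by
  have h1 : HasDerivAt (fun t => F t x) (fderiv ℝ (Function.uncurry F) (u, x) (1, 0)) u :=
    hF.hasFDerivAt.comp_hasDerivAt (f := fun t => (t, x)) u
      ((hasDerivAt_id u).prodMk (hasDerivAt_const u x))
  have h2 : HasDerivAt (F u) (fderiv ℝ (Function.uncurry F) (u, x) (0, 1)) x :=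
    hF.hasFDerivAt.comp_hasDerivAt (f := fun t => (u, t)) x
      ((hasDerivAt_const x u).prodMk (hasDerivAt_id x))
  have hsplit : ((p, q) : ℝ × ℝ) = p • (1, 0) + q • (0, 1) := by simp
  rw [pd1, pd2, h1.deriv, h2.deriv, hsplit, map_add, map_smul, map_smul, smul_eq_mul, smul_eq_mul,
    mul_comm p, mul_comm q]

theorem contDiff_Ncal {N : ℝ → ℝ → ℝ} {n : WithTop ℕ∞} (hN : ContDiff ℝ n (Function.uncurry N)) :
    ContDiff ℝ n (Function.uncurry (Ncal N)) :=
  hN.mul contDiff_fst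

theorem pd1_Ncal {N : ℝ → ℝ → ℝ} (hN : Differentiable ℝ (Function.uncurry N)) (u x : ℝ) :
    pd1 (Ncal N) u x = pd1 N u x * u + N u x := by
  have h : DifferentiableAt ℝ (fun t => N t x) u :=
    DifferentiableAt.comp (g := Function.uncurry N) (f := fun t => (t, x)) u (hN (u, x))
      (differentiableAt_id.prodMk (differentiableAt_const x))
  simpa [pd1, Ncal] using (h.hasDerivAt.fun_mul (hasDerivAt_id u)).deriv

theorem pd2_Ncal (N : ℝ → ℝ → ℝ) (u x : ℝ) : pd2 (Ncal N) u x = pd2 N u x * u := by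
  simp [pd2, Ncal]

theorem alphaC_eq_add_fderiv {N : ℝ → ℝ → ℝ} (hN : Differentiable ℝ (Function.uncurry N))
    (y p q x : ℝ) : alphaC N y p q x =
      N q y + (x - y) * fderiv ℝ (Function.uncurry N) (q, y) (p, 1) := by
  rw [fderiv_uncurry_apply (hN _), alphaC]; ring

theorem betaC_eq_neg_add_fderiv {N : ℝ → ℝ → ℝ}
    (hN : Differentiable ℝ (Function.uncurry (Ncal N))) (w p q v : ℝ) : betaC N w p q v =
      -(Ncal N w q + (v - w) * fderiv ℝ (Function.uncurry (Ncal N)) (w, q) (1, p)) := by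
  rw [fderiv_uncurry_apply (hN _), betaC]; ring

theorem exists_abs_alphaC_sub_le {N : ℝ → ℝ → ℝ} (hN : ContDiff ℝ 2 (Function.uncurry N))
    (T a b : ℝ) {M : ℝ} (hM : 1 ≤ M) :
    ∃ C, 0 ≤ C ∧ ∀ (u : ℝ → ℝ) (p x y : ℝ), x ∈ Icc a b → y ∈ Icc a b →
      u x ∈ Icc 0 T → u y ∈ Icc 0 T → |u x - u y| ≤ M * |x - y| →
      |u x - u y - (x - y) * p| ≤ M * (x - y) ^ 2 →
      |alphaC N y p (u y) x - N (u x) x| ≤ C * (x - y) ^ 2 := by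
  obtain ⟨C, hC, hle⟩ := exists_norm_sub_sub_smul_fderiv_le hN
    ((isCompact_Icc (a := 0) (b := T)).prod (isCompact_Icc (a := a) (b := b)))
    ((convex_Icc 0 T).prod (convex_Icc a b)) (zero_le_one.trans hM)
  refine ⟨C, hC, fun u p x y hx hy hux huy hlip htaylor => ?_⟩
  have h := hle (u y, y) ⟨huy, hy⟩ (u x, x) ⟨hux, hx⟩ (p, 1) (x - y)
    (max_le hlip (le_mul_of_one_le_left (abs_nonneg _) hM))
    (max_le htaylor (by simpa using by positivity))
  rw [alphaC_eq_add_fderiv (hN.differentiable two_ne_zero), abs_sub_comm, ← sub_sub]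
  exact h

theorem exists_abs_betaC_add_le {N : ℝ → ℝ → ℝ} (hN : ContDiff ℝ 2 (Function.uncurry N))
    (T a b : ℝ) {M : ℝ} (hM : 1 ≤ M) :
    ∃ C, 0 ≤ C ∧ ∀ (X : ℝ → ℝ) (p v w : ℝ), v ∈ Icc 0 T → w ∈ Icc 0 T →
      X v ∈ Icc a b → X w ∈ Icc a b → |X v - X w| ≤ M * |v - w| →
      |X v - X w - (v - w) * p| ≤ M * (v - w) ^ 2 →
      |betaC N w p (X w) v + Ncal N v (X v)| ≤ C * (v - w) ^ 2 := by
  obtain ⟨C, hC, hle⟩ := exists_norm_sub_sub_smul_fderiv_le (contDiff_Ncal hN)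
    ((isCompact_Icc (a := 0) (b := T)).prod (isCompact_Icc (a := a) (b := b)))
    ((convex_Icc 0 T).prod (convex_Icc a b)) (zero_le_one.trans hM)
  refine ⟨C, hC, fun X p v w hv hw hXv hXw hlip htaylor => ?_⟩
  have h := hle (w, X w) ⟨hw, hXw⟩ (v, X v) ⟨hv, hXv⟩ (1, p) (v - w)
    (max_le (le_mul_of_one_le_left (abs_nonneg _) hM) hlip)
    (max_le (by simpa using by positivity) htaylor)
  rw [betaC_eq_neg_add_fderiv ((contDiff_Ncal hN).differentiable two_ne_zero), neg_add_eq_sub,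
    ← sub_sub]
  exact h

/-- `K` bounds `N` and both of its first-order partial derivatives on `[0, T] × [a, b]`. -/
structure IsC1Bound (N : ℝ → ℝ → ℝ) (T a b K : ℝ) : Prop where
  nonneg : 0 ≤ K
  abs_le : ∀ u ∈ Icc 0 T, ∀ x ∈ Icc a b, |N u x| ≤ K
  abs_pd1_le : ∀ u ∈ Icc 0 T, ∀ x ∈ Icc a b, |pd1 N u x| ≤ K
  abs_pd2_le : ∀ u ∈ Icc 0 T, ∀ x ∈ Icc a b, |pd2 N u x| ≤ K

theorem exists_isC1Bound {N : ℝ → ℝ → ℝ} (hN : ContDiff ℝ 1 (Function.uncurry N)) (T a b : ℝ) :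
    ∃ K, IsC1Bound N T a b K := by
  have hcompact := (isCompact_Icc (a := 0) (b := T)).prod (isCompact_Icc (a := a) (b := b))
  have hdiff : Differentiable ℝ (Function.uncurry N) := hN.differentiable one_ne_zero
  obtain ⟨K, hK⟩ := hcompact.exists_bound_of_continuousOn hN.continuous.continuousOn
  obtain ⟨K', hK'⟩ := hcompact.exists_bound_of_continuousOn
    (hN.continuous_fderiv one_ne_zero).continuousOn
  have hfderiv : ∀ u ∈ Icc 0 T, ∀ x ∈ Icc a b, ∀ w : ℝ × ℝ, ‖w‖ = 1 →
      |fderiv ℝ (Function.uncurry N) (u, x) w| ≤ max |K| |K'| := fun u hu x hx w hw => by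
    simpa [hw] using (fderiv ℝ (Function.uncurry N) (u, x)).le_of_opNorm_le
      ((hK' (u, x) ⟨hu, hx⟩).trans ((le_abs_self K').trans (le_max_right |K| _))) w
  refine ⟨max |K| |K'|, by positivity, fun u hu x hx => ?_, fun u hu x hx => ?_,
    fun u hu x hx => ?_⟩
  · exact (hK (u, x) ⟨hu, hx⟩).trans ((le_abs_self K).trans (le_max_left _ _))
  · simpa [fderiv_uncurry_apply (hdiff _)] using hfderiv u hu x hx (1, 0) (by simp)
  · simpa [fderiv_uncurry_apply (hdiff _)] using hfderiv u hu x hx (0, 1) (by simp)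

theorem IsC1Bound.abs_alphaC_le {N : ℝ → ℝ → ℝ} {T a b K : ℝ} (hK : IsC1Bound N T a b K)
    {y p q x R : ℝ} (hq : q ∈ Icc 0 T) (hy : a ≤ y) (hyx : y ≤ x) (hx : x ≤ b) (hp : 0 ≤ p)
    (hR : p * (x - y) ≤ R) : |alphaC N y p q x| ≤ K * (R + (b - a) + 1) := by
  have hyb : y ∈ Icc a b := ⟨hy, hyx.trans hx⟩
  have hxy : 0 ≤ x - y := sub_nonneg.2 hyx
  have := hK.nonneg
  calc |alphaC N y p q x|
      = |pd1 N q y * (p * (x - y)) + pd2 N q y * (x - y) + N q y| := by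
        rw [alphaC]; congr 1; ring
    _ ≤ |pd1 N q y| * (p * (x - y)) + |pd2 N q y| * (x - y) + |N q y| := by
        refine (abs_add_three _ _ _).trans_eq ?_
        rw [abs_mul, abs_mul (pd2 N q y), abs_of_nonneg hxy, abs_of_nonneg (mul_nonneg hp hxy)]
    _ ≤ K * R + K * (b - a) + K := by
        gcongr
        exacts [hK.abs_pd1_le q hq y hyb, hK.abs_pd2_le q hq y hyb, hK.abs_le q hq y hyb]
    _ = K * (R + (b - a) + 1) := by ring

theorem IsC1Bound.abs_betaC_le {N : ℝ → ℝ → ℝ} {T a b K : ℝ} (hK : IsC1Bound N T a b K)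
    (hN : Differentiable ℝ (Function.uncurry N)) {w p q v R : ℝ} (hw : 0 ≤ w) (hwv : w ≤ v)
    (hv : v ≤ T) (hq : q ∈ Icc a b) (hp : 0 ≤ p) (hR : w * p ≤ R) :
    |betaC N w p q v| ≤ K * (T + R + 1) * v := by
  have hwT : w ∈ Icc 0 T := ⟨hw, hwv.trans hv⟩
  have hvw : 0 ≤ v - w := sub_nonneg.2 hwv
  have := hK.nonneg
  have hslope : |pd1 N w q * w + N w q + pd2 N w q * (w * p)| ≤ K * (T + R + 1) :=
    calc |pd1 N w q * w + N w q + pd2 N w q * (w * p)|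
        ≤ |pd1 N w q| * w + |N w q| + |pd2 N w q| * (w * p) := by
          refine (abs_add_three _ _ _).trans_eq ?_
          rw [abs_mul, abs_mul, abs_of_nonneg hw, abs_of_nonneg (mul_nonneg hw hp)]
      _ ≤ K * T + K + K * R := by
          gcongr
          exacts [hK.abs_pd1_le w hwT q hq, hwT.2, hK.abs_le w hwT q hq, hK.abs_pd2_le w hwT q hq]
      _ = K * (T + R + 1) := by ring
  have hvalue : |N w q| ≤ K * (T + R + 1) := (hK.abs_le w hwT q hq).trans
    (le_mul_of_one_le_right this (by nlinarith [hwT.2, mul_nonneg hw hp]))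
  calc |betaC N w p q v|
      = |(pd1 N w q * w + N w q + pd2 N w q * (w * p)) * (v - w) + N w q * w| := by
        rw [betaC, pd1_Ncal hN, pd2_Ncal, Ncal, ← abs_neg]; congr 1; ring
    _ ≤ |pd1 N w q * w + N w q + pd2 N w q * (w * p)| * (v - w) + |N w q| * w := by
        refine (abs_add_le _ _).trans_eq ?_
        rw [abs_mul, abs_mul, abs_of_nonneg hvw, abs_of_nonneg hw]
    _ ≤ K * (T + R + 1) * (v - w) + K * (T + R + 1) * w := by gcongr
    _ = K * (T + R + 1) * v := by ring

/-! ### Scheme solutions as pairs of arcs -/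

theorem exists_cell_of_mem_Ico {f : ℕ → ℝ} {x : ℝ} (n : ℕ) (h0 : f 0 ≤ x) (hn : x < f n) :
    ∃ i < n, x ∈ Ico (f i) (f (i + 1)) := by
  induction n with
  | zero => exact absurd h0 hn.not_ge
  | succ k ih =>
    rcases lt_or_ge x (f k) with h | h
    · obtain ⟨i, hi, hx⟩ := ih h
      exact ⟨i, hi.trans k.lt_succ_self, hx⟩
    · exact ⟨k, k.lt_succ_self, h, hn⟩

theorem exists_rightDeriv_of_cells {f : ℕ → ℝ} {n : ℕ} {g : ℝ → ℝ} {G : ℝ → ℝ → ℝ} {h : ℝ}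
    {S : Set ℝ} (hS : IsClosed S) (hf : ∀ i ≤ n, f i ∈ Icc (f 0) (f n))
    (hstep : ∀ i < n, f (i + 1) - f i ≤ h)
    (hg : ∀ i < n, ∀ x ∈ Icc (f i) (f (i + 1)),
      HasDerivWithinAt g (G (f i) x) (Icc (f i) (f (i + 1))) x)
    (hG : ∀ i < n, ContinuousOn (G (f i)) (Icc (f i) (f (i + 1))))
    (hmem : ∀ i < n, ∀ x ∈ Icc (f i) (f (i + 1)), x ∈ Ioc (f 0) (f n) → G (f i) x ∈ S) :
    ∃ g' : ℝ → ℝ, ∀ x ∈ Ico (f 0) (f n), HasDerivWithinAt g (g' x) (Ici x) x ∧ g' x ∈ S ∧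
      ∃ y ∈ Icc (f 0) x, x - y ≤ h ∧ g' x = G y x := by
  have hcell : ∀ x ∈ Ico (f 0) (f n), ∃ d, HasDerivWithinAt g d (Ici x) x ∧ d ∈ S ∧
      ∃ y ∈ Icc (f 0) x, x - y ≤ h ∧ d = G y x := fun x hx => by
    obtain ⟨i, hi, hxi⟩ := exists_cell_of_mem_Ico n hx.1 hx.2
    have hright : MapsTo (G (f i)) (Ioc x (f (i + 1))) S := fun t ht =>
      hmem i hi t ⟨hxi.1.trans ht.1.le, ht.2⟩
        ⟨hx.1.trans_lt ht.1, ht.2.trans (hf (i + 1) hi).2⟩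
    have hclosure : MapsTo (G (f i)) (Icc x (f (i + 1))) S := by
      have hcont : ContinuousOn (G (f i)) (closure (Ioc x (f (i + 1)))) := by
        rw [closure_Ioc hxi.2.ne]
        exact (hG i hi).mono (Icc_subset_Icc_left hxi.1)
      simpa only [closure_Ioc hxi.2.ne, hS.closure_eq] using hright.closure_of_continuousOn hcont
    exact ⟨_, hasDerivWithinAt_Ici_of_Icc (hg i hi x (Ico_subset_Icc_self hxi)) hxi,
      hclosure ⟨le_rfl, hxi.2.le⟩, f i, ⟨(hf i hi.le).1, hxi.1⟩, by linarith [hstep i hi, hxi.2],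
      rfl⟩
  choose! g' hg' using hcell
  exact ⟨g', hg'⟩

theorem Mesh.pt_mem_Icc (m : Mesh) {i : ℕ} (hi : i ≤ m.n) : m.pt i ∈ Icc (m.pt 0) (m.pt m.n) := by
  have hmono : ∀ j k, j ≤ k → k ≤ m.n → m.pt j ≤ m.pt k := fun j k hjk hk =>
    Nat.le_induction (fun _ => le_rfl)
      (fun l _ ih hl => (ih (l.le_succ.trans hl)).trans (m.mono l hl).le) k hjk hk
  exact ⟨hmono 0 i i.zero_le hi, hmono i m.n hi le_rfl⟩

theorem StepLe.pos {ms mi : Mesh} {s h : ℝ} (hs : StepLe ms mi s h) : 0 < h :=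
  (sub_pos.2 (ms.mono 0 ms.npos)).trans_le (hs.1 0 ms.npos)

/-- A straight scheme solution on `[a, c]` with the required signs and with cells of length at most
`h`; the mesh is only remembered through the existence, for each `x`, of a knot `y ∈ [x - h, x]`. -/
structure IsStraightArc (N : ℝ → ℝ → ℝ) (a c h : ℝ) (u u' u'' : ℝ → ℝ) : Prop
    extends HasRightSndDeriv u u' u'' a c where
  snd_eq : ∀ x ∈ Ico a c, ∃ y ∈ Icc a x, x - y ≤ h ∧ u'' x = alphaC N y (u' y) (u y) x * u x
  snd_nonneg : ∀ x ∈ Ico a c, 0 ≤ u'' x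
  deriv_left_nonneg : 0 ≤ u' a
  apply_left : u a = 0

/-- An inverse scheme solution on `[s, T]` running from `c` to `b`, with the required signs and with
cells of length at most `h`; the mesh is treated as in `IsStraightArc`. -/
structure IsInverseArc (N : ℝ → ℝ → ℝ) (s T c b h : ℝ) (X X' X'' : ℝ → ℝ) : Prop
    extends HasRightSndDeriv X X' X'' s T where
  snd_eq : ∀ v ∈ Ico s T, ∃ w ∈ Icc s v, v - w ≤ h ∧
    X'' v = betaC N w (X' w) (X w) v * X' v ^ 3
  snd_nonpos : ∀ v ∈ Ico s T, X'' v ≤ 0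
  deriv_pos : ∀ v ∈ Icc s T, 0 < X' v
  apply_left : X s = c
  apply_right : X T = b

/-- A scheme pair with the required signs: a straight and an inverse arc whose graphs, with the axes
of one of them exchanged, join differentiably at `(c, u c)`. -/
structure IsArcPair (N : ℝ → ℝ → ℝ) (a b c T h : ℝ) (u u' u'' X X' X'' : ℝ → ℝ) : Prop where
  straight : IsStraightArc N a c h u u' u''
  inverse : IsInverseArc N (u c) T c b h X X' X''
  mem_Ioo : c ∈ Ioo a b
  apply_mem : u c ∈ Ioo 0 T
  deriv_junction : X' (u c) = (u' c)⁻¹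

section GoodPair

variable {N : ℝ → ℝ → ℝ} {a b c ub h : ℝ} {ms mi : Mesh} {u u' X X' : ℝ → ℝ}

theorem GoodPair.exists_isStraightArc (hg : GoodPair N a b c ub ms mi u u' X X') (hac : a < c)
    (hms0 : ms.pt 0 = a) (hmsn : ms.pt ms.n = c) (hstep : StepLe ms mi (u c) h) :
    ∃ u'', IsStraightArc N a c h u u' u'' := by
  obtain ⟨⟨⟨hu, hu', hu''⟩, hua, -⟩, hsign, hsnd, -⟩ := hg
  have hcont : ContinuousOn u (Icc a c) := fun x hx => (hu x hx).continuousWithinAt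
  obtain ⟨u'', hcell⟩ := exists_rightDeriv_of_cells (f := ms.pt) (n := ms.n)
    (G := fun y x => alphaC N y (u' y) (u y) x * u x) isClosed_Ici (fun i hi => ms.pt_mem_Icc hi)
    hstep.1 hu'' (fun i hi => ContinuousOn.mul (by unfold alphaC; fun_prop)
      (hcont.mono (Icc_subset_Icc (hms0.ge.trans (ms.pt_mem_Icc hi.le).1)
        ((ms.pt_mem_Icc hi).2.trans hmsn.le))))
    (fun i hi x hx hxac => hsnd i hi x hx (by rwa [hms0, hmsn] at hxac))
  rw [hms0, hmsn] at hcell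
  have : (nhdsWithin a (Ioc a c)).NeBot := left_nhdsWithin_Ioc_neBot hac
  exact ⟨u'', ⟨hu, hu', fun x hx => (hcell x hx).1⟩, fun x hx => (hcell x hx).2.2,
    fun x hx => (hcell x hx).2.1, ge_of_tendsto
      ((hu' a ⟨le_rfl, hac.le⟩).mono_left (nhdsWithin_mono a Ioc_subset_Icc_self))
      (eventually_nhdsWithin_of_forall fun x hx => (hsign x hx).2.2.le), hua⟩

theorem GoodPair.exists_isInverseArc (hg : GoodPair N a b c ub ms mi u u' X X') (hac : a < c)
    (hmi0 : mi.pt 0 = 0) (hmiN : mi.pt mi.n = ub) (hstep : StepLe ms mi (u c) h) :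
    ∃ X'', IsInverseArc N (u c) ub c b h X X' X'' := by
  obtain ⟨⟨-, -, hpos, hlt, -, ⟨hX, hX', hX''⟩, hXub, hXs, hX's⟩, hsign, -, hXsign, hsnd⟩ := hg
  have hfirst : ubar mi (u c) 0 = u c := by rw [ubar, hmi0, max_eq_right hpos.le]
  have hlast : ubar mi (u c) mi.n = ub := by rw [ubar, hmiN, max_eq_left hlt.le]
  have hknot : ∀ i ≤ mi.n, ubar mi (u c) i ∈ Icc (ubar mi (u c) 0) (ubar mi (u c) mi.n) :=
    fun i hi => ⟨max_le_max_right _ (mi.pt_mem_Icc hi).1, max_le_max_right _ (mi.pt_mem_Icc hi).2⟩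
  obtain ⟨X'', hcell⟩ := exists_rightDeriv_of_cells (f := ubar mi (u c)) (n := mi.n)
    (G := fun w v => betaC N w (X' w) (X w) v * X' v ^ 3) isClosed_Iic hknot hstep.2 hX''
    (fun i hi => ContinuousOn.mul (by unfold betaC; fun_prop) ((hX'.mono (Icc_subset_Icc
      (hfirst.ge.trans (hknot i hi.le).1) ((hknot (i + 1) hi).2.trans hlast.le))).pow 3))
    (fun i hi v hv hvs => hsnd i hi v hv (by rwa [hfirst, hlast] at hvs))
  rw [hfirst, hlast] at hcell
  refine ⟨X'', ⟨hX, hX', fun v hv => (hcell v hv).1⟩, fun v hv => (hcell v hv).2.2,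
    fun v hv => (hcell v hv).2.1, fun v hv => ?_, hXs, hXub⟩
  rcases hv.1.eq_or_lt with rfl | hlt'
  · rw [hX's]
    exact one_div_pos.2 (hsign c ⟨hac, le_rfl⟩).2.2
  · exact (hXsign v ⟨hlt', hv.2⟩).2

theorem GoodPair.exists_isArcPair (hg : GoodPair N a b c ub ms mi u u' X X') (hc : c ∈ Ioo a b)
    (hms0 : ms.pt 0 = a) (hmsn : ms.pt ms.n = c) (hmi0 : mi.pt 0 = 0) (hmiN : mi.pt mi.n = ub)
    (hstep : StepLe ms mi (u c) h) :
    ∃ u'' X'', IsArcPair N a b c ub h u u' u'' X X' X'' := by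
  obtain ⟨u'', hu⟩ := hg.exists_isStraightArc hc.1 hms0 hmsn hstep
  obtain ⟨X'', hX⟩ := hg.exists_isInverseArc hc.1 hmi0 hmiN hstep
  obtain ⟨⟨-, -, hpos, hlt, -, -, -, -, hX's⟩, -⟩ := hg
  exact ⟨u'', X'', hu, hX, hc, ⟨hpos, hlt⟩, hX's.trans (one_div _)⟩

end GoodPair

/-! ### A priori bounds -/

namespace IsStraightArc

variable {N : ℝ → ℝ → ℝ} {a b c h T K x : ℝ} {u u' u'' : ℝ → ℝ}

theorem deriv_nonneg (S : IsStraightArc N a c h u u' u'') (hx : x ∈ Icc a c) : 0 ≤ u' x :=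
  S.deriv_left_nonneg.trans
    (S.monotoneOn_deriv S.snd_nonneg ⟨le_rfl, hx.1.trans hx.2⟩ hx hx.1)

theorem monotoneOn (S : IsStraightArc N a c h u u' u'') : MonotoneOn u (Icc a c) :=
  S.toHasRightSndDeriv.monotoneOn fun _ => S.deriv_nonneg

theorem apply_mem (S : IsStraightArc N a c h u u' u'') (hx : x ∈ Icc a c) :
    u x ∈ Icc 0 (u c) := by
  have hac : a ≤ c := hx.1.trans hx.2
  rw [← S.apply_left]
  exact ⟨S.monotoneOn ⟨le_rfl, hac⟩ hx hx.1, S.monotoneOn hx ⟨hac, le_rfl⟩ hx.2⟩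

theorem apply_right_le (S : IsStraightArc N a c h u u' u'') (hac : a ≤ c) :
    u c ≤ u' c * (c - a) := by
  simpa only [S.apply_left, sub_zero] using S.sub_le_deriv_mul_sub_of_convex S.snd_nonneg
    ⟨le_rfl, hac⟩ ⟨hac, le_rfl⟩ hac

theorem abs_snd_le (S : IsStraightArc N a c h u u' u'') (hK : IsC1Bound N T a b K)
    (huT : u c ≤ T) (hcb : c ≤ b) (hx : x ∈ Ico a c) :
    |u'' x| ≤ K * (T + (b - a) + 1) * u x := by
  obtain ⟨y, hy, -, hyx⟩ := S.snd_eq x hx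
  have hx' : x ∈ Icc a c := Ico_subset_Icc_self hx
  have hyc : y ∈ Icc a c := ⟨hy.1, hy.2.trans hx'.2⟩
  have htangent : u' y * (x - y) ≤ T := by
    linarith [S.deriv_mul_sub_le_of_convex S.snd_nonneg hyc hx' hy.2, (S.apply_mem hx').2,
      (S.apply_mem hyc).1]
  rw [hyx, abs_mul, abs_of_nonneg (S.apply_mem hx').1]
  gcongr
  · exact (S.apply_mem hx').1
  · exact hK.abs_alphaC_le ⟨(S.apply_mem hyc).1, (S.apply_mem hyc).2.trans huT⟩ hy.1 hy.2
      (hx'.2.trans hcb) (S.deriv_nonneg hyc) htangent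

theorem apply_add_deriv_le (S : IsStraightArc N a c h u u' u'') (hK : IsC1Bound N T a b K)
    (huT : u c ≤ T) (hac : a ≤ c) (hcb : c ≤ b) :
    u c + u' c ≤ u' a * Real.exp ((K * (T + (b - a) + 1) + 1) * (c - a)) := by
  set A := K * (T + (b - a) + 1)
  have hT : 0 ≤ T := (S.apply_mem ⟨hac, le_rfl⟩).1.trans huT
  have hA : 0 ≤ A := mul_nonneg hK.nonneg (by linarith)
  have hgrowth : ∀ x ∈ Ico a c, u' x + u'' x ≤ (A + 1) * (u x + u' x) := fun x hx => by
    nlinarith [(abs_le.1 (S.abs_snd_le hK huT hcb hx)).2, (S.apply_mem (Ico_subset_Icc_self hx)).1,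
      mul_nonneg hA (S.deriv_nonneg (Ico_subset_Icc_self hx))]
  have h := le_mul_exp_of_rightDeriv_le (f := fun x => u x + u' x) (g := fun x => (A + 1) * x) hac
    (S.continuousOn.add S.continuousOn_deriv)
    (fun x hx => (S.hasRightDeriv hx).add (S.hasRightDeriv_deriv x hx)) (by fun_prop)
    (fun x _ => by simpa using (hasDerivWithinAt_id x _).const_mul (A + 1)) hgrowth
  simpa only [S.apply_left, zero_add, mul_sub] using h

end IsStraightArc

namespace IsInverseArc

variable {N : ℝ → ℝ → ℝ} {s T a b c h K R v : ℝ} {X X' X'' : ℝ → ℝ}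

theorem apply_mem (S : IsInverseArc N s T c b h X X' X'') (hv : v ∈ Icc s T) :
    X v ∈ Icc c b := by
  have hsT : s ≤ T := hv.1.trans hv.2
  have hmono := S.monotoneOn fun v hv => (S.deriv_pos v hv).le
  rw [← S.apply_left, ← S.apply_right]
  exact ⟨hmono ⟨le_rfl, hsT⟩ hv hv.1, hmono hv ⟨hsT, le_rfl⟩ hv.2⟩

theorem mul_deriv_le (S : IsInverseArc N s T c b h X X' X'') (hs : 0 ≤ s) (hv : v ∈ Icc s T) :
    v * X' v ≤ s * X' s + (b - c) := by
  have hsv : s ∈ Icc s T := ⟨le_rfl, hv.1.trans hv.2⟩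
  have hanti : X' v ≤ X' s := S.antitoneOn_deriv S.snd_nonpos hsv hv hv.1
  have htangent := S.deriv_mul_sub_le_of_concave S.snd_nonpos hsv hv hv.1
  nlinarith [(S.apply_mem hv).2, S.apply_left]

theorem abs_snd_le (S : IsInverseArc N s T c b h X X' X'') (hK : IsC1Bound N T a b K)
    (hN : Differentiable ℝ (Function.uncurry N)) (hs : 0 ≤ s) (hac : a ≤ c)
    (hR : s * X' s + (b - c) ≤ R) (hv : v ∈ Ico s T) :
    |X'' v| ≤ K * (T + R + 1) * v * X' v ^ 3 := by
  obtain ⟨w, hw, -, hwv⟩ := S.snd_eq v hv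
  have hwT : w ∈ Icc s T := ⟨hw.1, hw.2.trans hv.2.le⟩
  have hv' : 0 < X' v := S.deriv_pos v (Ico_subset_Icc_self hv)
  have hXw : X w ∈ Icc a b := ⟨hac.trans (S.apply_mem hwT).1, (S.apply_mem hwT).2⟩
  rw [hwv, abs_mul, abs_of_pos (pow_pos hv' 3)]
  gcongr
  exact hK.abs_betaC_le hN (hs.trans hw.1) hw.2 hv.2.le hXw (S.deriv_pos w hwT).le
    ((S.mul_deriv_le hs hwT).trans hR)

theorem right_add_inv_deriv_le (S : IsInverseArc N s T c b h X X' X'') (hK : IsC1Bound N T a b K)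
    (hN : Differentiable ℝ (Function.uncurry N)) (hs : 0 ≤ s) (hsT : s ≤ T) (hac : a ≤ c)
    (hR : s * X' s + (b - c) ≤ R) (hR0 : 0 ≤ R) :
    T + (X' T)⁻¹ ≤ (s + (X' s)⁻¹) * Real.exp ((K * (T + R + 1) + 1) * (b - c)) := by
  set B := K * (T + R + 1)
  have hB : 0 ≤ B := mul_nonneg hK.nonneg (by linarith)
  have hgrowth : ∀ v ∈ Ico s T,
      1 + -X'' v / X' v ^ 2 ≤ (B + 1) * X' v * (v + (X' v)⁻¹) := fun v hv => by
    have hv' : 0 < X' v := S.deriv_pos v (Ico_subset_Icc_self hv)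
    have hv0 : 0 ≤ v := hs.trans hv.1
    calc 1 + -X'' v / X' v ^ 2 ≤ 1 + B * v * X' v ^ 3 / X' v ^ 2 := by
          gcongr
          exact (neg_le_abs _).trans (S.abs_snd_le hK hN hs hac hR hv)
      _ = 1 + B * (v * X' v) := by field_simp
      _ ≤ (B + 1) * (v * X' v + 1) := by nlinarith [mul_nonneg hv0 hv'.le]
      _ = (B + 1) * X' v * (v + (X' v)⁻¹) := by field_simp
  have h := le_mul_exp_of_rightDeriv_le (f := fun v => v + (X' v)⁻¹) (g := fun v => (B + 1) * X v)
    hsT (continuousOn_id.add (S.continuousOn_deriv.inv₀ fun v hv => (S.deriv_pos v hv).ne'))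
    (fun v hv => (hasDerivWithinAt_id v _).add
      ((S.hasRightDeriv_deriv v hv).inv (S.deriv_pos v (Ico_subset_Icc_self hv)).ne'))
    (S.continuousOn.const_mul _) (fun v hv => (S.hasRightDeriv hv).const_mul (B + 1)) hgrowth
  simpa only [S.apply_left, S.apply_right, mul_sub] using h

end IsInverseArc

namespace IsArcPair

variable {N : ℝ → ℝ → ℝ} {a b c T h K x v : ℝ} {u u' u'' X X' X'' : ℝ → ℝ}

theorem deriv_pos_right (S : IsArcPair N a b c T h u u' u'' X X' X'') : 0 < u' c := by
  rw [← inv_pos, ← S.deriv_junction]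
  exact S.inverse.deriv_pos _ ⟨le_rfl, S.apply_mem.2.le⟩

theorem deriv_right_mul_le (S : IsArcPair N a b c T h u u' u'' X X' X'') :
    u' c * (b - c) ≤ T := by
  have hle := S.apply_mem.2.le
  have hchord := S.inverse.sub_le_deriv_mul_sub_of_concave S.inverse.snd_nonpos
    ⟨le_rfl, hle⟩ ⟨hle, le_rfl⟩ hle
  rw [S.inverse.apply_left, S.inverse.apply_right, S.deriv_junction,
    le_inv_mul_iff₀ S.deriv_pos_right] at hchord
  linarith [S.apply_mem.1]

theorem straight_apply_mem (S : IsArcPair N a b c T h u u' u'' X X' X'') (hx : x ∈ Icc a c) :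
    u x ∈ Icc 0 T :=
  Icc_subset_Icc_right S.apply_mem.2.le (S.straight.apply_mem hx)

theorem mul_deriv_add_le (S : IsArcPair N a b c T h u u' u'' X X' X'') :
    u c * X' (u c) + (b - c) ≤ b - a := by
  have h : u c * (u' c)⁻¹ ≤ c - a := by
    rw [mul_inv_le_iff₀ S.deriv_pos_right, mul_comm]
    exact S.straight.apply_right_le S.mem_Ioo.1.le
  rw [S.deriv_junction]
  linarith

-- The slopes `u'` on the straight arc, then `1 / X'` on the inverse arc, increase along the
-- trajectory, so it is enough to bound the first and the last one.
theorem slope_mem (S : IsArcPair N a b c T h u u' u'' X X' X'') :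
    (∀ x ∈ Icc a c, u' x ∈ Icc (u' a) (X' T)⁻¹) ∧
      ∀ v ∈ Icc (u c) T, (X' v)⁻¹ ∈ Icc (u' a) (X' T)⁻¹ := by
  have hac := S.mem_Ioo.1.le
  have hle := S.apply_mem.2.le
  have hmono := S.straight.monotoneOn_deriv S.straight.snd_nonneg
  have hanti := S.inverse.antitoneOn_deriv S.inverse.snd_nonpos
  have hinv : ∀ v ∈ Icc (u c) T, ∀ w ∈ Icc (u c) T, v ≤ w → (X' v)⁻¹ ≤ (X' w)⁻¹ :=
    fun v hv w hw hvw => inv_anti₀ (S.inverse.deriv_pos w hw) (hanti hv hw hvw)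
  have hjunction : (X' (u c))⁻¹ = u' c := by rw [S.deriv_junction, inv_inv]
  refine ⟨fun x hx => ⟨hmono ⟨le_rfl, hac⟩ hx hx.1, ?_⟩, fun v hv =>
    ⟨?_, hinv v hv T ⟨hle, le_rfl⟩ hv.2⟩⟩
  · exact (hmono hx ⟨hac, le_rfl⟩ hx.2).trans
      (hjunction.ge.trans (hinv _ ⟨le_rfl, hle⟩ T ⟨hle, le_rfl⟩ hle))
  · exact ((hmono ⟨le_rfl, hac⟩ ⟨hac, le_rfl⟩ hac).trans hjunction.ge).trans
      (hinv _ ⟨le_rfl, hle⟩ v hv hv.1)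

theorem add_inv_deriv_le (S : IsArcPair N a b c T h u u' u'' X X' X'') (hK : IsC1Bound N T a b K)
    (hN : Differentiable ℝ (Function.uncurry N)) : T + (X' T)⁻¹ ≤
      (u c + u' c) * Real.exp ((K * (T + (b - a) + 1) + 1) * (b - c)) := by
  have h := S.inverse.right_add_inv_deriv_le hK hN S.apply_mem.1.le S.apply_mem.2.le
    S.mem_Ioo.1.le S.mul_deriv_add_le (by linarith [S.mem_Ioo.1, S.mem_Ioo.2])
  rwa [S.deriv_junction, inv_inv] at h

theorem add_inv_deriv_le_deriv_left_mul_exp (S : IsArcPair N a b c T h u u' u'' X X' X'')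
    (hK : IsC1Bound N T a b K) (hN : Differentiable ℝ (Function.uncurry N)) :
    T + (X' T)⁻¹ ≤ u' a * Real.exp ((K * (T + (b - a) + 1) + 1) * (b - a)) := by
  have hu := S.straight.apply_add_deriv_le hK S.apply_mem.2.le S.mem_Ioo.1.le S.mem_Ioo.2.le
  calc T + (X' T)⁻¹ ≤ _ := S.add_inv_deriv_le hK hN
    _ ≤ u' a * Real.exp ((K * (T + (b - a) + 1) + 1) * (c - a)) *
        Real.exp ((K * (T + (b - a) + 1) + 1) * (b - c)) := by gcongr
    _ = u' a * Real.exp ((K * (T + (b - a) + 1) + 1) * (b - a)) := by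
        rw [mul_assoc, ← Real.exp_add]; congr 2; ring

end IsArcPair

theorem exists_slope_bounds {N : ℝ → ℝ → ℝ} (hN : ContDiff ℝ 1 (Function.uncurry N))
    {a b c T : ℝ} (hT : 0 < T) (hcb : c < b) :
    ∃ m M : ℝ, 0 < m ∧ m ≤ M ∧ ∀ (h : ℝ) (u u' u'' X X' X'' : ℝ → ℝ),
      IsArcPair N a b c T h u u' u'' X X' X'' →
      (∀ x ∈ Icc a c, (u' x)⁻¹ ∈ Icc m M) ∧ ∀ v ∈ Icc (u c) T, X' v ∈ Icc m M := by
  obtain ⟨K, hK⟩ := exists_isC1Bound hN T a b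
  have hdiff : Differentiable ℝ (Function.uncurry N) := hN.differentiable one_ne_zero
  have hbc : 0 < b - c := sub_pos.2 hcb
  set A := K * (T + (b - a) + 1) + 1
  set m := ((T + T / (b - c)) * Real.exp (A * (b - c)))⁻¹
  refine ⟨m, max m (Real.exp (A * (b - a)) / T), by positivity, le_max_left _ _,
    fun h u u' u'' X X' X'' S => ?_⟩
  have hXT : 0 < (X' T)⁻¹ := inv_pos.2 (S.inverse.deriv_pos T ⟨S.apply_mem.2.le, le_rfl⟩)
  have hmin : T / Real.exp (A * (b - a)) ≤ u' a :=
    (div_le_iff₀ (Real.exp_pos _)).2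
      (by linarith [S.add_inv_deriv_le_deriv_left_mul_exp hK hdiff])
  have hmax : (X' T)⁻¹ ≤ (T + T / (b - c)) * Real.exp (A * (b - c)) :=
    calc (X' T)⁻¹ ≤ (u c + u' c) * Real.exp (A * (b - c)) := by
          linarith [S.add_inv_deriv_le hK hdiff]
      _ ≤ (T + T / (b - c)) * Real.exp (A * (b - c)) := by
          gcongr
          exacts [S.apply_mem.2.le, (le_div_iff₀ hbc).2 S.deriv_right_mul_le]
  have hinv : ∀ p ∈ Icc (u' a) (X' T)⁻¹, p⁻¹ ∈ Icc m (max m (Real.exp (A * (b - a)) / T)) :=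
    fun p hp => by
      have hp0 : T / Real.exp (A * (b - a)) ≤ p := hmin.trans hp.1
      exact ⟨inv_anti₀ ((by positivity : 0 < T / Real.exp _).trans_le hp0) (hp.2.trans hmax),
        le_max_of_le_right (by simpa only [inv_div] using inv_anti₀ (by positivity) hp0)⟩
  exact ⟨fun x hx => hinv _ (S.slope_mem.1 x hx),
    fun v hv => by simpa only [inv_inv] using hinv _ (S.slope_mem.2 v hv)⟩

/-! ### Consistency -/

theorem exists_abs_straight_defect_le {N : ℝ → ℝ → ℝ} (hN : ContDiff ℝ 2 (Function.uncurry N))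
    (a b : ℝ) {T : ℝ} (hT : 0 ≤ T) (L : ℝ) :
    ∃ C, 0 ≤ C ∧ ∀ (c h : ℝ) (u u' u'' : ℝ → ℝ), IsStraightArc N a c h u u' u'' →
      u c ≤ T → c ≤ b → (∀ x ∈ Icc a c, u' x ≤ L) →
      ∀ x ∈ Ico a c, |u'' x - Ncal N (u x) x| ≤ C * h ^ 2 := by
  obtain ⟨K, hK⟩ := exists_isC1Bound (hN.of_le one_le_two) T a b
  set A := K * (T + (b - a) + 1)
  obtain ⟨C, hC, hlin⟩ := exists_abs_alphaC_sub_le hN T a b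
    (M := max 1 (max L (A * T))) (le_max_left _ _)
  refine ⟨C * T, by positivity, fun c h u u' u'' S huT hcb hL x hx => ?_⟩
  obtain ⟨y, hy, hyh, hyx⟩ := S.snd_eq x hx
  have hx' : x ∈ Icc a c := Ico_subset_Icc_self hx
  have hy' : y ∈ Icc a c := ⟨hy.1, hy.2.trans hx'.2⟩
  have hmem : ∀ t ∈ Icc a c, u t ∈ Icc 0 T := fun t ht =>
    ⟨(S.apply_mem ht).1, (S.apply_mem ht).2.trans huT⟩
  have hA : 0 ≤ A := mul_nonneg hK.nonneg (by linarith [hx.1, hx.2])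
  have hfst : ∀ t ∈ Icc a c, |u' t| ≤ max 1 (max L (A * T)) := fun t ht => by
    rw [abs_of_nonneg (S.deriv_nonneg ht)]
    exact (hL t ht).trans ((le_max_left _ _).trans (le_max_right _ _))
  have hsnd : ∀ t ∈ Ico a c, |u'' t| ≤ max 1 (max L (A * T)) := fun t ht =>
    (S.abs_snd_le hK huT hcb ht).trans ((mul_le_mul_of_nonneg_left
      (hmem t (Ico_subset_Icc_self ht)).2 hA).trans ((le_max_right _ _).trans (le_max_right _ _)))
  have hcoeff := hlin u (u' y) x y ⟨hx.1, hx'.2.trans hcb⟩ ⟨hy.1, hy'.2.trans hcb⟩ (hmem x hx')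
    (hmem y hy') (S.abs_sub_le hfst hy' hx') (S.abs_taylor_le hsnd hy' hx' hy.2)
  calc |u'' x - Ncal N (u x) x| = |alphaC N y (u' y) (u y) x - N (u x) x| * u x := by
        rw [hyx, Ncal, ← sub_mul, abs_mul, abs_of_nonneg (hmem x hx').1]
    _ ≤ C * h ^ 2 * T := by
        gcongr
        · exact (hmem x hx').1
        · exact hcoeff.trans (by gcongr; exact sub_nonneg.2 hy.2)
        · exact (hmem x hx').2
    _ = C * T * h ^ 2 := by ring

theorem exists_abs_inverse_defect_le {N : ℝ → ℝ → ℝ} (hN : ContDiff ℝ 2 (Function.uncurry N))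
    {a b c : ℝ} (hac : a ≤ c) (hcb : c ≤ b) {T M : ℝ} (hT : 0 ≤ T) (hM : 0 ≤ M) :
    ∃ C, 0 ≤ C ∧ ∀ (s h : ℝ) (X X' X'' : ℝ → ℝ), IsInverseArc N s T c b h X X' X'' →
      0 ≤ s → (∀ v ∈ Icc s T, X' v ≤ M) →
      ∀ v ∈ Ico s T, |X'' v + Ncal N v (X v) * X' v ^ 3| ≤ C * h ^ 2 := by
  obtain ⟨K, hK⟩ := exists_isC1Bound (hN.of_le one_le_two) T a b
  set B := K * (T + (T * M + (b - c)) + 1)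
  have hB : 0 ≤ B := mul_nonneg hK.nonneg (by nlinarith [mul_nonneg hT hM])
  obtain ⟨C, hC, hlin⟩ := exists_abs_betaC_add_le hN T a b
    (M := max 1 (max M (B * T * M ^ 3))) (le_max_left _ _)
  refine ⟨C * M ^ 3, by positivity, fun s h X X' X'' S hs hX v hv => ?_⟩
  obtain ⟨w, hw, hwh, hwv⟩ := S.snd_eq v hv
  have hv' : v ∈ Icc s T := Ico_subset_Icc_self hv
  have hw' : w ∈ Icc s T := ⟨hw.1, hw.2.trans hv'.2⟩
  have hmem : ∀ t ∈ Icc s T, X t ∈ Icc a b := fun t ht =>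
    ⟨hac.trans (S.apply_mem ht).1, (S.apply_mem ht).2⟩
  have hfst : ∀ t ∈ Icc s T, |X' t| ≤ max 1 (max M (B * T * M ^ 3)) := fun t ht => by
    rw [abs_of_pos (S.deriv_pos t ht)]
    exact (hX t ht).trans ((le_max_left _ _).trans (le_max_right _ _))
  have hR : s * X' s + (b - c) ≤ T * M + (b - c) := by
    have hsT : s ∈ Icc s T := ⟨le_rfl, hv'.1.trans hv'.2⟩
    have := S.deriv_pos s hsT
    gcongr
    exacts [hsT.2, hX s hsT]
  have hsnd : ∀ t ∈ Ico s T, |X'' t| ≤ max 1 (max M (B * T * M ^ 3)) := fun t ht => by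
    have ht' : t ∈ Icc s T := Ico_subset_Icc_self ht
    calc |X'' t| ≤ B * t * X' t ^ 3 :=
          S.abs_snd_le hK (hN.differentiable two_ne_zero) hs hac hR ht
      _ ≤ B * T * M ^ 3 := by
          have := S.deriv_pos t ht'
          gcongr
          exacts [ht'.2, hX t ht']
      _ ≤ _ := (le_max_right _ _).trans (le_max_right _ _)
  have hcoeff := hlin X (X' w) v w ⟨hs.trans hv.1, hv'.2⟩ ⟨hs.trans hw.1, hw'.2⟩ (hmem v hv')
    (hmem w hw') (S.abs_sub_le hfst hw' hv') (S.abs_taylor_le hsnd hw' hv' hw.2)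
  have hpos : 0 < X' v := S.deriv_pos v hv'
  calc |X'' v + Ncal N v (X v) * X' v ^ 3|
      = |betaC N w (X' w) (X w) v + Ncal N v (X v)| * X' v ^ 3 := by
        rw [hwv, ← add_mul, abs_mul, abs_of_pos (pow_pos hpos 3)]
    _ ≤ C * h ^ 2 * M ^ 3 := by
        gcongr
        · exact hcoeff.trans (by gcongr; exact sub_nonneg.2 hw.2)
        · exact hX v hv'
    _ = C * M ^ 3 * h ^ 2 := by ring

/-! ### The inverse equation as a first-order system -/

/-- The vector field of the inverse equation `x'' = -𝒩(v, x) x'³`, written as a first-order system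
for `y = (x, x')`. -/
def inverseField (N : ℝ → ℝ → ℝ) (v : ℝ) (y : ℝ × ℝ) : ℝ × ℝ := (y.2, -Ncal N v y.1 * y.2 ^ 3)

theorem contDiff_inverseField {N : ℝ → ℝ → ℝ} {n : WithTop ℕ∞}
    (hN : ContDiff ℝ n (Function.uncurry N)) :
    ContDiff ℝ n (Function.uncurry (inverseField N)) := by
  have hNcal : ContDiff ℝ n fun p : ℝ × ℝ × ℝ => Ncal N p.1 p.2.1 :=
    (contDiff_Ncal hN).comp (contDiff_fst.prodMk contDiff_snd.fst)
  exact contDiff_snd.snd.prodMk (hNcal.neg.mul (contDiff_snd.snd.pow 3))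

theorem HasRightSndDeriv.isApproxSolution_inverseField {N : ℝ → ℝ → ℝ} {f f' f'' : ℝ → ℝ}
    {s t ε : ℝ} (hf : HasRightSndDeriv f f' f'' s t)
    (hε : ∀ v ∈ Ico s t, |f'' v + Ncal N v (f v) * f' v ^ 3| ≤ ε) :
    IsApproxSolution (inverseField N) ε (fun v => (f v, f' v)) s t where
  continuousOn := hf.continuousOn.prodMk hf.continuousOn_deriv
  exists_rightDeriv v hv := by
    refine ⟨(f' v, f'' v), (hf.hasRightDeriv hv).prodMk (hf.hasRightDeriv_deriv v hv), ?_⟩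
    simpa [inverseField, Prod.norm_def] using hε v hv

theorem abs_inverse_defect_le {n p q M δ : ℝ} (hp : 0 < p) (hpM : p⁻¹ ≤ M) (hδ : |q - n| ≤ δ) :
    |-(q / p ^ 3) + n * p⁻¹ ^ 3| ≤ M ^ 3 * δ := by
  have hM : 0 < M := (inv_pos.2 hp).trans_le hpM
  calc |-(q / p ^ 3) + n * p⁻¹ ^ 3| = p⁻¹ ^ 3 * |q - n| := by
        rw [show -(q / p ^ 3) + n * p⁻¹ ^ 3 = -(p⁻¹ ^ 3 * (q - n)) by field_simp; ring, abs_neg,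
          abs_mul, abs_of_pos (by positivity : 0 < p⁻¹ ^ 3)]
    _ ≤ M ^ 3 * δ := by gcongr

theorem IsArcPair.exists_isApproxSolution {N : ℝ → ℝ → ℝ} {a b c T h m M δ ε : ℝ}
    {u u' u'' X X' X'' : ℝ → ℝ} (S : IsArcPair N a b c T h u u' u'' X X' X'') (hm : 0 < m)
    (hu : ∀ x ∈ Icc a c, (u' x)⁻¹ ∈ Icc m M) (hX : ∀ v ∈ Icc (u c) T, X' v ∈ Icc m M)
    (hδ : ∀ x ∈ Ico a c, |u'' x - Ncal N (u x) x| ≤ δ) (hδε : M ^ 3 * δ ≤ ε)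
    (hε : ∀ v ∈ Ico (u c) T, |X'' v + Ncal N v (X v) * X' v ^ 3| ≤ ε) :
    ∃ z : ℝ → ℝ × ℝ, IsApproxSolution (inverseField N) ε z 0 T ∧
      (∀ v ∈ Icc 0 T, z v ∈ Icc a b ×ˢ Icc m M) ∧ (∀ x ∈ Icc a c, z (u x) = (x, (u' x)⁻¹)) ∧
      ∀ v ∈ Icc (u c) T, z v = (X v, X' v) := by
  have hac := S.mem_Ioo.1.le
  have hpos : ∀ x ∈ Icc a c, 0 < u' x := fun x hx => inv_pos.1 (hm.trans_le (hu x hx).1)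
  have hM : 0 < M := hm.trans_le ((hu a ⟨le_rfl, hac⟩).1.trans (hu a ⟨le_rfl, hac⟩).2)
  obtain ⟨g, hg⟩ := exists_isIncreasingInverse hac (inv_pos.2 hM) S.straight.hasDerivWithinAt
    fun x hx => (inv_le_comm₀ (hpos x hx) hM).1 (hu x hx).2
  have hinv := S.straight.inverse hg hpos
  rw [S.straight.apply_left] at hinv
  have hmem : ∀ v ∈ Icc 0 (u c), g v ∈ Icc a c ∧ u (g v) = v := fun v hv => by
    rw [← S.straight.apply_left] at hv
    exact ⟨hg.mem v hv, hg.right_inv v hv⟩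
  set z : ℝ → ℝ × ℝ := fun v => if v < u c then (g v, (u' (g v))⁻¹) else (X v, X' v)
  have hright : EqOn z (fun v => (X v, X' v)) (Icc (u c) T) := fun v hv => if_neg hv.1.not_gt
  have hleft : EqOn z (fun v => (g v, (u' (g v))⁻¹)) (Icc 0 (u c)) := fun v hv => by
    rcases hv.2.eq_or_lt with rfl | hlt
    · rw [hright ⟨le_rfl, S.apply_mem.2.le⟩]
      simp only [hg.left_inv c ⟨hac, le_rfl⟩, S.inverse.apply_left, S.deriv_junction]
    · exact if_pos hlt
  refine ⟨z, .union S.apply_mem.1.le S.apply_mem.2.le ?_ ?_, fun v hv => ?_, fun x hx => ?_,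
    fun v hv => hright hv⟩
  · refine (hinv.isApproxSolution_inverseField fun v hv => ?_).congr hleft
    obtain ⟨hgv, hugv⟩ := hmem v (Ico_subset_Icc_self hv)
    have hgc : g v < c := hgv.2.lt_of_ne fun h => hv.2.ne (by rw [← hugv, h])
    have hdefect := hδ (g v) ⟨hgv.1, hgc⟩
    rw [hugv] at hdefect
    exact (abs_inverse_defect_le (hpos _ hgv) (hu _ hgv).2 hdefect).trans hδε
  · exact (S.inverse.isApproxSolution_inverseField hε).congr hright
  · rcases le_total v (u c) with h | h
    · rw [hleft ⟨hv.1, h⟩]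
      have hgv := (hmem v ⟨hv.1, h⟩).1
      exact ⟨⟨hgv.1, hgv.2.trans S.mem_Ioo.2.le⟩, hu _ hgv⟩
    · rw [hright ⟨h, hv.2⟩]
      have hXv := S.inverse.apply_mem ⟨h, hv.2⟩
      exact ⟨⟨hac.trans hXv.1, hXv.2⟩, hX v ⟨h, hv.2⟩⟩
  · rw [hleft (S.straight.apply_mem hx)]
    simp only [hg.left_inv x hx]

/-- `x` solves the inverse equation on `[0, T]`, with slope at least `k` (positive in use) and
second derivative bounded by `B`. -/
structure IsInverseSolution (N : ℝ → ℝ → ℝ) (T k B : ℝ) (x x' x'' : ℝ → ℝ) : Prop where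
  isC2On : IsC2On x x' x'' (Icc 0 T)
  snd_eq : ∀ v ∈ Icc 0 T, x'' v = -Ncal N v (x v) * x' v ^ 3
  le_deriv : ∀ v ∈ Icc 0 T, k ≤ x' v
  abs_snd_le : ∀ v ∈ Icc 0 T, |x'' v| ≤ B

theorem exists_lipschitz_retraction_prod {a b c d : ℝ} (hab : a ≤ b) (hcd : c ≤ d) :
    ∃ ρ : ℝ × ℝ → ℝ × ℝ, LipschitzWith 1 ρ ∧ (∀ y, ρ y ∈ Icc a b ×ˢ Icc c d) ∧
      ∀ y ∈ Icc a b ×ˢ Icc c d, ρ y = y := by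
  refine ⟨fun y => (projIcc a b hab y.1, projIcc c d hcd y.2), ?_,
    fun y => ⟨Subtype.coe_prop _, Subtype.coe_prop _⟩, fun y hy => ?_⟩
  · simpa using (((LipschitzWith.subtype_val _).comp (LipschitzWith.projIcc hab)).comp
      LipschitzWith.prod_fst).prodMk
        (((LipschitzWith.subtype_val _).comp (LipschitzWith.projIcc hcd)).comp
          LipschitzWith.prod_snd)
  · simp only [projIcc_of_mem hab hy.1, projIcc_of_mem hcd hy.2]

theorem closedBall_subset_Icc_prod {a b c d r : ℝ} {z : ℝ × ℝ} (hz : z ∈ Icc a b ×ˢ Icc c d) :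
    Metric.closedBall z r ⊆ Icc (a - r) (b + r) ×ˢ Icc (c - r) (d + r) := by
  rw [← closedBall_prod_same, Real.closedBall_eq_Icc, Real.closedBall_eq_Icc]
  exact prod_mono (Icc_subset_Icc (by linarith [hz.1.1]) (by linarith [hz.1.2]))
    (Icc_subset_Icc (by linarith [hz.2.1]) (by linarith [hz.2.2]))

theorem exists_isInverseSolution_of_isApproxSolution {N : ℝ → ℝ → ℝ}
    (hN : ContDiff ℝ 1 (Function.uncurry N)) {a b m M T r : ℝ} (hab : a ≤ b) (hmM : m ≤ M)
    (hT : 0 ≤ T) (hr : 0 ≤ r) :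
    ∃ B κ, 0 ≤ B ∧ 0 < κ ∧ ∀ (ε : ℝ) (z : ℝ → ℝ × ℝ), 0 ≤ ε → κ * ε ≤ r →
      IsApproxSolution (inverseField N) ε z 0 T → (∀ v ∈ Icc 0 T, z v ∈ Icc a b ×ˢ Icc m M) →
      ∃ x x' x'', IsInverseSolution N T (m - r) B x x' x'' ∧ (x 0, x' 0) = z 0 ∧
        ∀ v ∈ Icc 0 T, |x v - (z v).1| ≤ κ * ε ∧ |x' v - (z v).2| ≤ κ * ε := by
  have hF := contDiff_inverseField hN
  set box := Icc (a - r) (b + r) ×ˢ Icc (m - r) (M + r)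
  have hbox : IsCompact box := isCompact_Icc.prod isCompact_Icc
  obtain ⟨ρ, hρ, hρbox, hρid⟩ := exists_lipschitz_retraction_prod (a := a - r) (b := b + r)
    (c := m - r) (d := M + r) (by linarith) (by linarith)
  obtain ⟨B, hB⟩ := ((isCompact_Icc (a := 0) (b := T)).prod hbox).exists_bound_of_continuousOn
    hF.continuous.continuousOn
  obtain ⟨κ, hκ, hnear⟩ := exists_solution_near_of_isApproxSolution hF hbox hρ hρbox hρid hT
  refine ⟨|B|, κ, abs_nonneg B, hκ, fun ε z hε hκε hz hzmem => ?_⟩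
  have hball : ∀ v ∈ Icc 0 T, Metric.closedBall (z v) r ⊆ box := fun v hv =>
    closedBall_subset_Icc_prod (hzmem v hv)
  obtain ⟨y, hy0, hy⟩ := hnear ε r z hε hκε hz hball
  have hybox : ∀ v ∈ Icc 0 T, y v ∈ box := fun v hv => hball v hv (by
    rw [Metric.mem_closedBall, dist_eq_norm]; exact (hy v hv).2.trans hκε)
  have hycont : ContinuousOn y (Icc 0 T) := fun v hv => (hy v hv).1.continuousWithinAt
  refine ⟨fun v => (y v).1, fun v => (y v).2, fun v => (inverseField N v (y v)).2,
    ⟨⟨fun v hv => (hy v hv).1.fst, fun v hv => (hy v hv).1.snd, ?_⟩, fun _ _ => rfl,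
      fun v hv => (hybox v hv).2.1, fun v hv => ?_⟩, hy0, fun v hv => ?_⟩
  · exact (hF.continuous.comp_continuousOn (continuousOn_id.prodMk hycont)).snd
  · exact (norm_snd_le _).trans ((hB (v, y v) ⟨hv, hybox v hv⟩).trans (le_abs_self B))
  · exact ⟨(norm_fst_le _).trans (hy v hv).2, (norm_snd_le _).trans (hy v hv).2⟩

theorem exists_isApproxSolution_near_isArcPair {N : ℝ → ℝ → ℝ}
    (hN : ContDiff ℝ 2 (Function.uncurry N)) {a b c T : ℝ} (hT : 0 < T) (hc : c ∈ Ioo a b) :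
    ∃ m M C : ℝ, 0 < m ∧ m ≤ M ∧ 0 < C ∧ ∀ (h : ℝ) (u u' u'' X X' X'' : ℝ → ℝ),
      IsArcPair N a b c T h u u' u'' X X' X'' →
      ∃ z : ℝ → ℝ × ℝ, IsApproxSolution (inverseField N) (C * h ^ 2) z 0 T ∧
        (∀ v ∈ Icc 0 T, z v ∈ Icc a b ×ˢ Icc m M) ∧ (∀ x ∈ Icc a c, z (u x) = (x, (u' x)⁻¹)) ∧
        ∀ v ∈ Icc (u c) T, z v = (X v, X' v) := by
  obtain ⟨m, M, hm, hmM, hslope⟩ := exists_slope_bounds (hN.of_le one_le_two) hT hc.2 (a := a)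
  have hM : 0 < M := hm.trans_le hmM
  obtain ⟨C₁, hC₁, hstraight⟩ := exists_abs_straight_defect_le hN a b hT.le m⁻¹
  obtain ⟨C₂, hC₂, hinverse⟩ := exists_abs_inverse_defect_le hN hc.1.le hc.2.le hT.le hM.le
  refine ⟨m, M, M ^ 3 * C₁ + C₂ + 1, hm, hmM, by positivity, fun h u u' u'' X X' X'' S => ?_⟩
  obtain ⟨hu, hX⟩ := hslope h u u' u'' X X' X'' S
  have hu' : ∀ x ∈ Icc a c, u' x ≤ m⁻¹ := fun x hx => by
    simpa only [inv_inv] using inv_anti₀ hm (hu x hx).1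
  have hδ := hstraight c h u u' u'' S.straight S.apply_mem.2.le hc.2.le hu'
  have hε := hinverse (u c) h X X' X'' S.inverse S.apply_mem.1.le fun v hv => (hX v hv).2
  have hC₁h : 0 ≤ M ^ 3 * C₁ * h ^ 2 := by positivity
  have hC₂h : 0 ≤ C₂ * h ^ 2 := by positivity
  exact S.exists_isApproxSolution hm hu hX hδ (by nlinarith) fun v hv =>
    (hε v hv).trans (by nlinarith)

theorem exists_isInverseSolution_near_isArcPair {N : ℝ → ℝ → ℝ}
    (hN : ContDiff ℝ 2 (Function.uncurry N)) {a b c T : ℝ} (hT : 0 < T) (hc : c ∈ Ioo a b) :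
    ∃ k B κ h₀ : ℝ, 0 < k ∧ 0 ≤ B ∧ 0 < κ ∧ 0 < h₀ ∧ ∀ (h : ℝ) (u u' u'' X X' X'' : ℝ → ℝ),
      0 ≤ h → h ≤ h₀ → IsArcPair N a b c T h u u' u'' X X' X'' →
      ∃ x x' x'', IsInverseSolution N T k B x x' x'' ∧ x 0 = a ∧ x' 0 = (u' a)⁻¹ ∧ c ≤ x T ∧
        (∀ t ∈ Icc a c, k ≤ (u' t)⁻¹ ∧ |x (u t) - t| ≤ κ * h ^ 2 ∧
          |x' (u t) - (u' t)⁻¹| ≤ κ * h ^ 2) ∧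
        ∀ v ∈ Icc (u c) T, |x v - X v| ≤ κ * h ^ 2 ∧ |x' v - X' v| ≤ κ * h ^ 2 := by
  have hac : a ≤ c := hc.1.le
  obtain ⟨m, M, C, hm, hmM, hC, happrox⟩ := exists_isApproxSolution_near_isArcPair hN hT hc
  set r := min (b - c) (m / 2)
  have hr : 0 < r := lt_min (sub_pos.2 hc.2) (half_pos hm)
  have hrm : r < m := (min_le_right _ _).trans_lt (half_lt_self hm)
  obtain ⟨B, κ, hB, hκ, hshadow⟩ := exists_isInverseSolution_of_isApproxSolution
    (hN.of_le one_le_two) (hac.trans hc.2.le) hmM hT.le hr.le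
  refine ⟨m - r, B, κ * C, √(r / (κ * C)), sub_pos.2 hrm, hB, by positivity, by positivity,
    fun h u u' u'' X X' X'' h0 hle S => ?_⟩
  have hsmall : κ * C * h ^ 2 ≤ r :=
    (le_div_iff₀' (by positivity)).1 ((Real.le_sqrt h0 (by positivity)).1 hle)
  obtain ⟨z, hz, hzmem, hzu, hzX⟩ := happrox h u u' u'' X X' X'' S
  obtain ⟨x, x', x'', hx, hx0, hxz⟩ :=
    hshadow (C * h ^ 2) z (by positivity) (by rwa [← mul_assoc]) hz hzmem
  simp only [← mul_assoc] at hxz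
  rw [← S.straight.apply_left, hzu a ⟨le_rfl, hac⟩, S.straight.apply_left, Prod.mk.injEq] at hx0
  refine ⟨x, x', x'', hx, hx0.1, hx0.2, ?_, fun t ht => ⟨?_, ?_⟩, fun v hv => ?_⟩
  · have hxT := (hxz T ⟨hT.le, le_rfl⟩).1
    rw [hzX T ⟨S.apply_mem.2.le, le_rfl⟩, S.inverse.apply_right] at hxT
    linarith [(abs_le.1 hxT).1, min_le_left (b - c) (m / 2)]
  · have hzt := (hzmem (u t) (S.straight_apply_mem ht)).2.1
    rw [hzu t ht] at hzt
    exact (sub_le_self m hr.le).trans hzt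
  · simpa only [hzu t ht] using hxz (u t) (S.straight_apply_mem ht)
  · simpa only [hzX v hv] using hxz v ⟨S.apply_mem.1.le.trans hv.1, hv.2⟩

/-! ### Return to the straight picture -/

namespace IsInverseSolution

variable {N : ℝ → ℝ → ℝ} {T k B η p v y : ℝ} {x x' x'' g : ℝ → ℝ}

theorem abs_inverse_sub_le (hx : IsInverseSolution N T k B x x' x'')
    (hg : IsIncreasingInverse x x' g 0 T) (hk : 0 < k) (hv : v ∈ Icc 0 T)
    (hy : y ∈ Icc (x 0) (x T)) (hvy : |x v - y| ≤ η) : |v - g y| ≤ η / k := by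
  have h := mul_abs_sub_le_abs_sub hx.isC2On.1 hx.le_deriv hv (hg.mem y hy)
  rw [hg.right_inv y hy] at h
  exact (le_div_iff₀' hk).2 (h.trans hvy)

theorem abs_inv_sub_inv_deriv_inverse_le (hx : IsInverseSolution N T k B x x' x'')
    (hg : IsIncreasingInverse x x' g 0 T) (hk : 0 < k) (hB : 0 ≤ B) (hv : v ∈ Icc 0 T)
    (hy : y ∈ Icc (x 0) (x T)) (hvy : |x v - y| ≤ η) (hkp : k ≤ p) (hp : |x' v - p| ≤ η) :
    |p⁻¹ - (x' (g y))⁻¹| ≤ (η + B * (η / k)) / k ^ 2 := by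
  have hgy := hg.mem y hy
  have hlip : |x' v - x' (g y)| ≤ B * (η / k) :=
    ((convex_Icc 0 T).norm_image_sub_le_of_norm_hasDerivWithin_le hx.isC2On.2.1 hx.abs_snd_le
      hgy hv).trans (mul_le_mul_of_nonneg_left (hx.abs_inverse_sub_le hg hk hv hy hvy) hB)
  calc |p⁻¹ - (x' (g y))⁻¹| ≤ |p - x' (g y)| / k ^ 2 :=
        abs_inv_sub_inv_le hk hkp (hx.le_deriv _ hgy)
    _ ≤ (η + B * (η / k)) / k ^ 2 := by
        gcongr
        exact (abs_sub_le p (x' v) _).trans (add_le_add (by rwa [abs_sub_comm]) hlip)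

end IsInverseSolution

theorem scheme_approximates_shooting_inverse_solution_general
    (a b c ub : ℝ) (hub : 0 < ub) (hc : c ∈ Ioo a b)
    (N : ℝ → ℝ → ℝ) (hN : ContDiff ℝ 2 (Function.uncurry N)) :
    ∃ κ₁ κ₂ h₀ : ℝ, 0 < κ₁ ∧ 0 < κ₂ ∧ 0 < h₀ ∧
      ∀ ms mi : Mesh,
        ms.pt 0 = a → ms.pt ms.n = c → mi.pt 0 = 0 → mi.pt mi.n = ub →
        ∀ u u' X X' : ℝ → ℝ, GoodPair N a b c ub ms mi u u' X X' →
        ∀ h : ℝ, h ≤ h₀ → StepLe ms mi (u c) h →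
        ∃ xh xh' xh'' : ℝ → ℝ,
          IsC2On xh xh' xh'' (Icc 0 ub) ∧
          (∀ v ∈ Icc (0:ℝ) ub, xh'' v = -(Ncal N v (xh v)) * (xh' v) ^ 3) ∧
          xh 0 = a ∧ xh' 0 = 1 / u' a ∧
          StrictMonoOn xh (Icc 0 ub) ∧
          Icc a c ⊆ xh '' Icc 0 ub ∧
          ∃ uh uh' : ℝ → ℝ,
            (∀ v ∈ Icc (0:ℝ) ub, uh (xh v) = v) ∧
            (∀ x ∈ Icc a c, HasDerivWithinAt uh (uh' x) (Icc a c) x) ∧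
            (∀ x ∈ Icc a c,
              |u x - uh x| ≤ κ₁ * h ^ 2 ∧ |u' x - uh' x| ≤ κ₁ * h ^ 2) ∧
            (∀ v ∈ Icc (u c) ub,
              |X v - xh v| ≤ κ₂ * h ^ 2 ∧ |X' v - xh' v| ≤ κ₂ * h ^ 2) := by
  obtain ⟨k, B, κ, h₀, hk, hB, hκ, hh₀, hnear⟩ :=
    exists_isInverseSolution_near_isArcPair hN hub hc
  refine ⟨κ / k + (κ + B * (κ / k)) / k ^ 2, κ, h₀, by positivity, hκ, hh₀,
    fun ms mi hms0 hmsn hmi0 hmiN u u' X X' hpair h hle hstep => ?_⟩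
  obtain ⟨u'', X'', S⟩ := hpair.exists_isArcPair hc hms0 hmsn hmi0 hmiN hstep
  obtain ⟨xh, xh', xh'', hx, hx0, hx0', hxT, hstraight, hinverse⟩ :=
    hnear h u u' u'' X X' X'' hstep.pos.le hle S
  obtain ⟨g, hg⟩ := exists_isIncreasingInverse hub.le hk hx.isC2On.1 hx.le_deriv
  have hsub : Icc a c ⊆ Icc (xh 0) (xh ub) := hx0 ▸ Icc_subset_Icc_right hxT
  refine ⟨xh, xh', xh'', hx.isC2On, hx.snd_eq, hx0, by rw [hx0', one_div], hg.strictMonoOn,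
    fun t ht => ⟨g t, hg.mem t (hsub ht), hg.right_inv t (hsub ht)⟩, g, fun t => (xh' (g t))⁻¹,
    hg.left_inv, fun t ht => (hg.hasDerivWithinAt t (hsub ht)).mono hsub, fun t ht => ?_,
    fun v hv => by simpa only [abs_sub_comm] using hinverse v hv⟩
  obtain ⟨hkt, hval, hder⟩ := hstraight t ht
  have hu := hx.abs_inverse_sub_le hg hk (S.straight_apply_mem ht) (hsub ht) hval
  have hu' := hx.abs_inv_sub_inv_deriv_inverse_le hg hk hB (S.straight_apply_mem ht) (hsub ht)
    hval hkt hder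
  rw [inv_inv] at hu'
  constructor
  · calc |u t - g t| ≤ κ / k * h ^ 2 := hu.trans_eq (by ring)
      _ ≤ _ := by gcongr; exact le_add_of_nonneg_right (by positivity)
  · calc |u' t - (xh' (g t))⁻¹| ≤ (κ + B * (κ / k)) / k ^ 2 * h ^ 2 := hu'.trans_eq (by ring)
      _ ≤ _ := by gcongr; exact le_add_of_nonneg_left (by positivity)

/-- under hypothesis (H) there are constants `κ₁, κ₂, h₀ > 0` (depending
only on the data of the problem) such that for all meshes of maximal step size `h ≤ h₀`
and every scheme pair `(ũ, x̃)` satisfying the sign inequalities, there is an exact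
solution `x̂` of the inverse equation on `[0,u_b]` with `x̂(0) = a`, `x̂'(0) = 1/ũ'(a)`,
strictly increasing with image covering `[a,c]`, whose inverse `û` approximates `ũ`
within `κ₁h²` in the C¹-norm on `[a,c]`, while `x̂` approximates `x̃` within `κ₂h²`
in the C¹-norm on `[ũ(c), u_b]`. -/
theorem scheme_approximates_shooting_inverse_solution
    (a b c ub : ℝ) (hab : a < b) (hub : 0 < ub) (hc : c ∈ Ioo a b)
    (N : ℝ → ℝ → ℝ) (hN : ContDiff ℝ 2 (Function.uncurry N))
    (hH : HypH N a b) :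
    ∃ κ₁ κ₂ h₀ : ℝ, 0 < κ₁ ∧ 0 < κ₂ ∧ 0 < h₀ ∧
      ∀ ms mi : Mesh,
        ms.pt 0 = a → ms.pt ms.n = c → mi.pt 0 = 0 → mi.pt mi.n = ub →
        ∀ u u' X X' : ℝ → ℝ, GoodPair N a b c ub ms mi u u' X X' →
        ∀ h : ℝ, h ≤ h₀ → StepLe ms mi (u c) h →
        ∃ xh xh' xh'' : ℝ → ℝ,
          IsC2On xh xh' xh'' (Icc 0 ub) ∧
          (∀ v ∈ Icc (0:ℝ) ub, xh'' v = -(Ncal N v (xh v)) * (xh' v) ^ 3) ∧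
          xh 0 = a ∧ xh' 0 = 1 / u' a ∧
          StrictMonoOn xh (Icc 0 ub) ∧
          Icc a c ⊆ xh '' Icc 0 ub ∧
          ∃ uh uh' : ℝ → ℝ,
            (∀ v ∈ Icc (0:ℝ) ub, uh (xh v) = v) ∧
            (∀ x ∈ Icc a c, HasDerivWithinAt uh (uh' x) (Icc a c) x) ∧
            (∀ x ∈ Icc a c,
              |u x - uh x| ≤ κ₁ * h ^ 2 ∧ |u' x - uh' x| ≤ κ₁ * h ^ 2) ∧
            (∀ v ∈ Icc (u c) ub,
              |X v - xh v| ≤ κ₂ * h ^ 2 ∧ |X' v - xh' v| ≤ κ₂ * h ^ 2) := by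
  exact scheme_approximates_shooting_inverse_solution_general a b c ub hub hc N hN
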